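/- Let X be the punctured Möbius band with boundary circles C₁ and C₂. Suppose f : X → X is a boundary-preserving map with f(∂X) ⊆ C₁ such that the restriction, viewed as a map f|C₂ : C₂ → C₁, is essential, while the restriction, viewed as a map f|C₁ : C₁ → C₁, is inessential. Then f is boundary-homotopic to a map g : X → X having at most two fixed points, exactly one of which lies in X ∖ ∂X. -/

import Mathlib

open Set

namespace PMB

/-- The square [0,1] × [−1,1] as a subspace of ℝ². -/
def Sq : Set (ℝ × ℝ) := Set.Icc 0 1 ×ˢ Set.Icc (-1) 1

/-- The identification (0,y) ∼ (1,−y) on the square. -/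
def rel (p q : Sq) : Prop :=
  (p : ℝ × ℝ) = (q : ℝ × ℝ) ∨
  ((p : ℝ × ℝ).1 = 0 ∧ (q : ℝ × ℝ).1 = 1 ∧ (p : ℝ × ℝ).2 = -(q : ℝ × ℝ).2) ∨
  ((p : ℝ × ℝ).1 = 1 ∧ (q : ℝ × ℝ).1 = 0 ∧ (q : ℝ × ℝ).2 = -(p : ℝ × ℝ).2)

/-- The Möbius band: the quotient of the square by the identification. -/
def M := Quot rel

instance : TopologicalSpace M := inferInstanceAs (TopologicalSpace (Quot rel))

/-- The quotient map. -/
def qm : Sq → M := Quot.mk rel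

/-- The open disc of radius 1/4 centred at (1/2, 0). -/
def Bdisc : Set (ℝ × ℝ) := Metric.ball (1/2, 0) (1/4)

/-- The circle of radius 1/4 centred at (1/2, 0). -/
def Scirc : Set (ℝ × ℝ) := Metric.sphere (1/2, 0) (1/4)

/-- The punctured Möbius band, as a subset of the Möbius band. -/
def Xset : Set M := {m | m ∉ qm '' {p : Sq | (p : ℝ × ℝ) ∈ Bdisc}}

/-- The punctured Möbius band as a topological space. -/
abbrev X : Type := ↥Xset

/-- The boundary circle of the Möbius band. -/
def C1 : Set X := {x | ∃ p : Sq, qm p = (x : M) ∧ ((p : ℝ × ℝ).2 = 1 ∨ (p : ℝ × ℝ).2 = -1)}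

/-- The boundary circle coming from the removed disc. -/
def C2 : Set X := {x | ∃ p : Sq, qm p = (x : M) ∧ (p : ℝ × ℝ) ∈ Scirc}

/-- The boundary of the punctured Möbius band. -/
def Bd : Set X := C1 ∪ C2

/-- A self-map of the punctured Möbius band is boundary-preserving if it sends ∂X into ∂X. -/
def BoundaryPreserving (f : C(X, X)) : Prop := MapsTo f Bd Bd

/-- Two self-maps are boundary-homotopic if there is a homotopy between them keeping
∂X inside ∂X at all times. -/
def BoundaryHomotopic (f g : C(X, X)) : Prop :=
  ∃ H : ContinuousMap.Homotopy f g, ∀ x : X, x ∈ Bd → ∀ t : unitInterval, H (t, x) ∈ Bd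

/-- A continuous map is inessential if it is homotopic to a constant map. -/
def Inessential {α β : Type*} [TopologicalSpace α] [TopologicalSpace β] (f : C(α, β)) : Prop :=
  ∃ b : β, ContinuousMap.Homotopic f (ContinuousMap.const α b)

/-- A continuous map is essential if it is not homotopic to a constant map. -/
def Essential {α β : Type*} [TopologicalSpace α] [TopologicalSpace β] (f : C(α, β)) : Prop :=
  ¬ Inessential f

/-- The restriction of a self-map of X to a subset `s` mapped into a subset `t`,
as a continuous map between the subspaces. -/
def restrictMap (f : C(X, X)) {s t : Set X} (h : MapsTo f s t) : C(s, t) :=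
  ⟨fun x => ⟨f x, h x.2⟩, Continuous.subtype_mk (f.continuous.comp continuous_subtype_val) _⟩

end PMB


namespace PMB

lemma rel_equiv : Equivalence rel := by
  refine ⟨fun p => Or.inl rfl, ?_, ?_⟩
  · rintro p q (h | h | h)
    · exact Or.inl h.symm
    · exact Or.inr (Or.inr ⟨h.2.1, h.1, h.2.2⟩)
    · exact Or.inr (Or.inl ⟨h.2.1, h.1, h.2.2⟩)
  · rintro ⟨⟨p1, p2⟩, hp⟩ ⟨⟨q1, q2⟩, hq⟩ ⟨⟨r1, r2⟩, hr⟩ h h'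
    simp only [rel, Prod.mk.injEq] at *
    rcases h with h | h | h <;> rcases h' with h' | h' | h'
    · left; constructor <;> linarith
    · right; left; refine ⟨?_, ?_, ?_⟩ <;> linarith
    · right; right; refine ⟨?_, ?_, ?_⟩ <;> linarith
    · right; left; refine ⟨?_, ?_, ?_⟩ <;> linarith
    · linarith
    · left; constructor <;> linarith
    · right; right; refine ⟨?_, ?_, ?_⟩ <;> linarith
    · left; constructor <;> linarith
    · linarith

lemma qm_eq {p q : Sq} : qm p = qm q ↔ rel p q := by
  constructor
  · intro h
    exact (rel_equiv.eqvGen_iff).1 (Quot.eqvGen_exact h)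
  · exact fun h => Quot.sound h

/-- The punctured square. -/
def R : Set (ℝ × ℝ) := {p | p ∈ Sq ∧ p ∉ Bdisc}

lemma mem_Bdisc {p : ℝ × ℝ} : p ∈ Bdisc ↔ max |p.1 - 1/2| |p.2| < 1/4 := by
  simp [Bdisc, Metric.mem_ball, Prod.dist_eq, Real.dist_eq]

lemma mem_Scirc {p : ℝ × ℝ} : p ∈ Scirc ↔ max |p.1 - 1/2| |p.2| = 1/4 := by
  rw [Scirc, Metric.mem_sphere, Prod.dist_eq, Real.dist_eq, Real.dist_eq, sub_zero]

lemma mem_R {p : ℝ × ℝ} : p ∈ R ↔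
    (0 ≤ p.1 ∧ p.1 ≤ 1) ∧ (-1 ≤ p.2 ∧ p.2 ≤ 1) ∧ 1/4 ≤ max |p.1 - 1/2| |p.2| := by
  have h : p ∈ R ↔ p ∈ Sq ∧ ¬ p ∈ Bdisc := Iff.rfl
  rw [h, mem_Bdisc, not_lt, Sq, mem_prod, mem_Icc, mem_Icc, and_assoc]

lemma isCompact_R : IsCompact R := by
  have h1 : IsCompact Sq := isCompact_Icc.prod isCompact_Icc
  have : R = Sq \ Bdisc := rfl
  rw [this]
  exact h1.diff Metric.isOpen_ball

instance : CompactSpace R := isCompact_iff_compactSpace.1 isCompact_R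

lemma qm_mem {p : ℝ × ℝ} (hp : p ∈ R) : qm ⟨p, hp.1⟩ ∈ Xset := by
  rintro ⟨q, hq, h⟩
  rw [qm_eq] at h
  have hq' := mem_Bdisc.1 hq
  have h3 := abs_lt.1 (lt_of_le_of_lt (le_max_left _ _) hq')
  rcases h with h | h | h
  · exact hp.2 (by rw [← show (q : ℝ × ℝ) = p from h]; exact hq)
  · linarith [h.1]
  · linarith [h.1]

/-- The projection to the punctured Moebius band. -/
def pr (p : R) : X := ⟨qm ⟨p.1, p.2.1⟩, qm_mem p.2⟩

lemma continuous_qm : Continuous qm := continuous_quot_mk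

lemma continuous_pr : Continuous pr := by
  refine Continuous.subtype_mk (continuous_qm.comp ?_) _
  exact Continuous.subtype_mk continuous_subtype_val _

lemma pr_surj : Function.Surjective pr := by
  rintro ⟨m, hm⟩
  induction m using Quot.ind with
  | mk p =>
    have : (p : ℝ × ℝ) ∈ R := ⟨p.2, fun h => hm ⟨p, h, rfl⟩⟩
    exact ⟨⟨p, this⟩, rfl⟩

lemma pr_eq {p q : R} : pr p = pr q ↔
    (p : ℝ × ℝ) = (q : ℝ × ℝ) ∨
  ((p : ℝ × ℝ).1 = 0 ∧ (q : ℝ × ℝ).1 = 1 ∧ (p : ℝ × ℝ).2 = -(q : ℝ × ℝ).2) ∨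
  ((p : ℝ × ℝ).1 = 1 ∧ (q : ℝ × ℝ).1 = 0 ∧ (q : ℝ × ℝ).2 = -(p : ℝ × ℝ).2) := by
  rw [pr, pr, Subtype.mk.injEq, qm_eq]; rfl

/-- Embedding used to show the Hausdorff property. -/
noncomputable def emb : M → ℂ × ℂ := Quot.lift
  (fun p : Sq => (Complex.exp (2 * Real.pi * Complex.I * (p : ℝ × ℝ).1),
    (p : ℝ × ℝ).2 * Complex.exp (Real.pi * Complex.I * (p : ℝ × ℝ).1))) (by
    rintro ⟨⟨p1, p2⟩, hp⟩ ⟨⟨q1, q2⟩, hq⟩ h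
    simp only [rel, Prod.mk.injEq] at h
    rcases h with ⟨rfl, rfl⟩ | ⟨rfl, rfl, rfl⟩ | ⟨rfl, rfl, rfl⟩
    · rfl
    · simp [Complex.exp_two_pi_mul_I, Complex.exp_pi_mul_I]
    · simp [Complex.exp_two_pi_mul_I, Complex.exp_pi_mul_I])

lemma continuous_emb : Continuous emb := by
  refine continuous_quot_lift _ ?_
  fun_prop

lemma emb_inj : Function.Injective emb := by
  rintro m n
  induction m using Quot.ind with | mk p
  induction n using Quot.ind with | mk q
  obtain ⟨⟨p1, p2⟩, hp⟩ := p
  obtain ⟨⟨q1, q2⟩, hq⟩ := q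
  intro h
  simp only [emb, Prod.mk.injEq] at h
  obtain ⟨h1, h2⟩ := h
  apply Quot.sound
  simp only [rel, Prod.mk.injEq]
  simp only [Sq, mem_prod, mem_Icc] at hp hq
  rw [Complex.exp_eq_exp_iff_exists_int] at h1
  obtain ⟨n, hn⟩ := h1
  have hn' : p1 = q1 + n := by
    have hpi : (2 * Real.pi * Complex.I : ℂ) ≠ 0 := by simp [Real.pi_ne_zero]
    have : (2 * Real.pi * Complex.I : ℂ) * p1 = (2 * Real.pi * Complex.I : ℂ) * (q1 + n) := by
      rw [hn]; ring
    have := mul_left_cancel₀ hpi this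
    exact_mod_cast this
  have hnn : n = 0 ∨ n = 1 ∨ n = -1 := by
    have a1 : (n : ℝ) ≤ 1 := by linarith
    have a2 : (-1 : ℝ) ≤ n := by linarith
    have a1 : n ≤ 1 := by exact_mod_cast a1
    have a2 : -1 ≤ n := by exact_mod_cast a2
    omega
  rcases hnn with rfl | rfl | rfl
  · left
    have : p1 = q1 := by simpa using hn'
    subst this
    refine ⟨rfl, ?_⟩
    have := mul_right_cancel₀ (Complex.exp_ne_zero _) h2
    exact_mod_cast this
  · right; right
    have e1 : p1 = 1 := by push_cast at hn'; linarith
    have e2 : q1 = 0 := by push_cast at hn'; linarith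
    subst e1; subst e2
    simp [Complex.exp_pi_mul_I] at h2
    refine ⟨rfl, rfl, ?_⟩
    exact_mod_cast h2.symm
  · right; left
    have e1 : p1 = 0 := by push_cast at hn'; linarith
    have e2 : q1 = 1 := by push_cast at hn'; linarith
    subst e1; subst e2
    simp [Complex.exp_pi_mul_I] at h2
    refine ⟨rfl, rfl, ?_⟩
    exact_mod_cast h2

instance : T2Space M := T2Space.of_injective_continuous emb_inj continuous_emb
instance : T2Space X := inferInstance
instance : CompactSpace X := by
  constructor
  rw [← pr_surj.range_eq]
  exact isCompact_range continuous_pr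

/-- Descent of maps with a parameter. -/
lemma descend {T Z : Type*} [TopologicalSpace T] [TopologicalSpace Z] [CompactSpace T] [T2Space T]
    (K : T × R → Z) (hK : Continuous K)
    (hc : ∀ t (p q : R), p.1.1 = 0 → q.1.1 = 1 → p.1.2 = - q.1.2 → K (t, p) = K (t, q)) :
    ∃ G : C(T × X, Z), ∀ t p, G (t, pr p) = K (t, p) := by
  let q : T × R → T × X := Prod.map id pr
  have hq : Continuous q := continuous_id.prodMap continuous_pr
  have hs : Function.Surjective q := Function.surjective_id.prodMap pr_surj
  have hqq : Topology.IsQuotientMap q := hq.isClosedMap.isQuotientMap hq hs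
  have key : ∀ a b, q a = q b → K a = K b := by
    rintro ⟨t, p⟩ ⟨t', p'⟩ h
    simp only [q, Prod.map, id, Prod.mk.injEq] at h
    obtain ⟨rfl, h⟩ := h
    rcases pr_eq.1 h with h | h | h
    · rw [Subtype.ext h]
    · exact hc _ _ _ h.1 h.2.1 h.2.2
    · exact (hc _ _ _ h.2.1 h.1 h.2.2).symm
  let G : T × X → Z := fun a => K (Function.surjInv hs a)
  have hG : ∀ a, G (q a) = K a := fun a => key _ _ (Function.surjInv_eq hs _)
  have hG' : G ∘ q = K := funext hG
  refine ⟨⟨G, ?_⟩, fun t p => hG (t, p)⟩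
  rw [hqq.continuous_iff, hG']
  exact hK

lemma descend1 {Z : Type*} [TopologicalSpace Z]
    (K : R → Z) (hK : Continuous K)
    (hc : ∀ (p q : R), p.1.1 = 0 → q.1.1 = 1 → p.1.2 = - q.1.2 → K p = K q) :
    ∃ G : C(X, Z), ∀ p, G (pr p) = K p := by
  obtain ⟨G, hG⟩ := descend (T := Unit) (fun a : Unit × R => K a.2) (by fun_prop)
    (fun _ p q => hc p q)
  exact ⟨⟨fun x => G ((), x), by fun_prop⟩, fun p => hG () p⟩

lemma exists_lev : ∃ G : C(X, ℝ), ∀ p : R, G (pr p) = |p.1.2| :=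
  descend1 (fun p => |p.1.2|) (by fun_prop) (fun p q _ _ h => by simp [h])

/-- The level function. -/
noncomputable def lev : C(X, ℝ) := exists_lev.choose

lemma lev_pr (p : R) : lev (pr p) = |p.1.2| := exists_lev.choose_spec p

lemma lev_nonneg (x : X) : 0 ≤ lev x := by
  obtain ⟨p, rfl⟩ := pr_surj x
  rw [lev_pr]; positivity

lemma lev_le (x : X) : lev x ≤ 1 := by
  obtain ⟨p, rfl⟩ := pr_surj x
  rw [lev_pr]
  exact abs_le.2 (mem_R.1 p.2).2.1

lemma mem_C1 (x : X) : x ∈ C1 ↔ lev x = 1 := by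
  constructor
  · rintro ⟨p, hp, h⟩
    have hR : (p : ℝ × ℝ) ∈ R := ⟨p.2, fun h' => x.2 ⟨p, h', hp⟩⟩
    have : x = pr ⟨p, hR⟩ := Subtype.ext hp.symm
    rw [this, lev_pr]
    rcases h with h | h <;> simp [h]
  · intro h
    obtain ⟨p, rfl⟩ := pr_surj x
    rw [lev_pr] at h
    refine ⟨⟨p.1, p.2.1⟩, rfl, ?_⟩
    exact eq_or_eq_neg_of_abs_eq h

lemma mem_C2 (x : X) : x ∈ C2 ↔ ∃ p : R, x = pr p ∧ max |p.1.1 - 1/2| |p.1.2| = 1/4 := by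
  constructor
  · rintro ⟨p, hp, h⟩
    have hR : (p : ℝ × ℝ) ∈ R := ⟨p.2, fun h' => x.2 ⟨p, h', hp⟩⟩
    have : x = pr ⟨p, hR⟩ := Subtype.ext hp.symm
    exact ⟨_, this, mem_Scirc.1 h⟩
  · rintro ⟨p, rfl, h⟩
    exact ⟨⟨p.1, p.2.1⟩, rfl, mem_Scirc.2 h⟩

lemma lev_C2 {x : X} (hx : x ∈ C2) : lev x ≤ 1/4 := by
  obtain ⟨p, rfl, h⟩ := (mem_C2 x).1 hx
  rw [lev_pr, ← h]
  exact le_max_right _ _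

/-- Maps changing only the second coordinate. -/
lemma exists_psi (Ψ : unitInterval × ℝ → ℝ) (hΨ : Continuous Ψ)
    (hodd : ∀ t y, Ψ (t, -y) = - Ψ (t, y)) (hle : ∀ t y, |Ψ (t, y)| ≤ 1)
    (hid : ∀ t y, |y| ≤ 1/4 → Ψ (t, y) = y) (hge : ∀ t y, 1/4 ≤ |y| → 1/4 ≤ |Ψ (t, y)|) :
    ∃ G : C(unitInterval × X, X), ∀ t (p : R), ∃ h, G (t, pr p) = pr ⟨(p.1.1, Ψ (t, p.1.2)), h⟩ := by
  have key : ∀ (t) (p : R), (p.1.1, Ψ (t, p.1.2)) ∈ R := by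
    rintro t ⟨⟨x, y⟩, hp⟩
    rw [mem_R] at hp ⊢
    obtain ⟨h1, h2, h3⟩ := hp
    refine ⟨h1, abs_le.1 (hle t y), ?_⟩
    simp only at *
    rcases le_total |y| (1/4) with h | h
    · rw [hid t y h]; exact h3
    · exact le_max_of_le_right (hge t y h)
  obtain ⟨G, hG⟩ := descend (T := unitInterval)
    (fun a => pr ⟨(a.2.1.1, Ψ (a.1, a.2.1.2)), key a.1 a.2⟩)
    (continuous_pr.comp (by fun_prop)) (by
      intro t p q h1 h2 h3
      rw [pr_eq]
      right; left
      refine ⟨h1, h2, ?_⟩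
      show Ψ (t, p.1.2) = - Ψ (t, q.1.2)
      rw [h3, hodd])
  exact ⟨G, fun t p => ⟨key t p, hG t p⟩⟩

end PMB


namespace PMB

/-- Projection of the line to the unit interval. -/
noncomputable def toI (x : ℝ) : unitInterval := Set.projIcc 0 1 zero_le_one x

@[fun_prop]
lemma continuous_toI : Continuous toI := continuous_projIcc (h := zero_le_one)

lemma toI_coe (x : ℝ) : (toI x : ℝ) = max 0 (min 1 x) := Set.coe_projIcc _ _ _ _

lemma toI_of_mem {x : ℝ} (h0 : 0 ≤ x) (h1 : x ≤ 1) : (toI x : ℝ) = x := by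
  rw [toI_coe, min_eq_right h1, max_eq_right h0]

lemma toI_zero : toI 0 = 0 := by
  apply Subtype.ext; simp [toI_coe]

lemma toI_one : toI 1 = 1 := by
  apply Subtype.ext; simp [toI_coe]

lemma toI_of_le {x : ℝ} (h0 : x ≤ 0) : toI x = 0 := by
  apply Subtype.ext; rw [toI_coe, max_eq_left]; rfl
  exact (min_le_right _ _).trans h0

lemma toI_of_ge {x : ℝ} (h0 : 1 ≤ x) : toI x = 1 := by
  apply Subtype.ext; rw [toI_coe, min_eq_left h0]; simp

lemma toI_self (t : unitInterval) : toI t = t := by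
  apply Subtype.ext; exact toI_of_mem t.2.1 t.2.2

lemma exists_s : ∃ S : C(unitInterval × X, X), (∀ x, S (0, x) = x) ∧
    (∀ t x, x ∈ C1 → S (t, x) ∈ C1) ∧ (∀ t x, x ∈ C2 → S (t, x) = x) ∧
    (∀ x, 1/2 ≤ lev x → S (1, x) ∈ C1) := by
  obtain ⟨G, hG⟩ := exists_psi (fun a => max (-1) (min 1
      (a.2 + 3 * a.1 * max 0 (a.2 - 1/4) - 3 * a.1 * max 0 (-a.2 - 1/4)))) (by fun_prop)
    (by
      intro t y
      have h : ∀ u : ℝ, max (-1) (min 1 (-u)) = - max (-1) (min 1 u) := by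
        intro u
        simp only [max_def, min_def]
        split_ifs <;> linarith
      simp only
      rw [← h]
      congr 2
      simp only [neg_neg]
      ring)
    (by
      intro t y
      rw [abs_le]
      exact ⟨le_max_left _ _, max_le (by norm_num) (min_le_left _ _)⟩)
    (by
      intro t y hy
      rw [abs_le] at hy
      simp only
      rw [max_eq_left (by linarith : y - 1/4 ≤ 0), max_eq_left (by linarith : -y - 1/4 ≤ 0)]
      rw [min_eq_right (by linarith), max_eq_right (by linarith)]
      ring)
    (by
      intro t y hy
      have ht := t.2.1
      rw [le_abs] at hy ⊢
      rcases hy with hy | hy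
      · left
        simp only
        rw [max_eq_right (by linarith : 0 ≤ y - 1/4), max_eq_left (by linarith : -y - 1/4 ≤ 0)]
        apply le_max_of_le_right
        apply le_min (by norm_num)
        have : 0 ≤ 3 * (t : ℝ) * (y - 1/4) := by
          apply mul_nonneg <;> linarith
        linarith
      · right
        simp only
        rw [max_eq_left (by linarith : y - 1/4 ≤ 0), max_eq_right (by linarith : 0 ≤ -y - 1/4)]
        rw [le_neg]
        apply max_le (by norm_num)
        apply min_le_of_right_le
        have : 0 ≤ 3 * (t : ℝ) * (- y - 1/4) := by
          apply mul_nonneg <;> linarith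
        linarith)
  refine ⟨G, ?_, ?_, ?_, ?_⟩
  · intro x
    obtain ⟨p, rfl⟩ := pr_surj x
    obtain ⟨h, e⟩ := hG 0 p
    rw [e]
    congr 1
    apply Subtype.ext
    obtain ⟨⟨x, y⟩, hp⟩ := p
    have h2 := (mem_R.1 hp).2.1
    simp at h2 ⊢
    rw [min_eq_right h2.2, max_eq_right h2.1]
  · intro t x hx
    obtain ⟨p, rfl⟩ := pr_surj x
    obtain ⟨h, e⟩ := hG t p
    have ht := t.2.1
    rw [mem_C1, lev_pr] at *
    rw [e, lev_pr]
    obtain ⟨⟨x, y⟩, hp⟩ := p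
    simp only at *
    rcases eq_or_eq_neg_of_abs_eq hx with h | h
    · subst h
      norm_num
      rw [min_eq_left (by linarith)]; norm_num
    · subst h
      norm_num
      rw [min_eq_right (by linarith), max_eq_left (by linarith)]; norm_num
  · intro t x hx
    obtain ⟨p, rfl, hp⟩ := (mem_C2 x).1 hx
    obtain ⟨h, e⟩ := hG t p
    rw [e]
    congr 1
    apply Subtype.ext
    obtain ⟨⟨x, y⟩, hpR⟩ := p
    have hy : |y| ≤ 1/4 := hp ▸ le_max_right _ _
    rw [abs_le] at hy
    simp only [Prod.mk.injEq, true_and]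
    rw [max_eq_left (by linarith : y - 1/4 ≤ 0), max_eq_left (by linarith : -y - 1/4 ≤ 0)]
    rw [min_eq_right (by linarith), max_eq_right (by linarith)]
    ring
  · intro x hx
    obtain ⟨p, rfl⟩ := pr_surj x
    obtain ⟨h, e⟩ := hG 1 p
    rw [mem_C1, e, lev_pr]
    rw [lev_pr] at hx
    obtain ⟨⟨x, y⟩, hp⟩ := p
    simp only [le_abs] at *
    have e1 : ((1 : unitInterval) : ℝ) = 1 := rfl
    rcases hx with hx | hx
    · rw [max_eq_right (by linarith : 0 ≤ y - 1/4), max_eq_left (by linarith : -y - 1/4 ≤ 0),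
        min_eq_left (by rw [e1]; linarith)]
      norm_num
    · rw [max_eq_left (by linarith : y - 1/4 ≤ 0), max_eq_right (by linarith : 0 ≤ -y - 1/4),
        min_eq_right (by rw [e1]; linarith), max_eq_left (by rw [e1]; linarith)]
      norm_num

lemma exists_P : ∃ P : C(unitInterval × X, X), (∀ x, P (1, x) = x) ∧
    (∀ t x, lev (P (t, x)) = min (max (1/3) (t : ℝ)) (lev x)) := by
  obtain ⟨G, hG⟩ := exists_psi (fun a => max (-(max (1/3) (a.1 : ℝ))) (min (max (1/3) (a.1 : ℝ)) a.2))
    (by fun_prop)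
    (by
      intro t y
      have := le_max_left (1/3) (t : ℝ)
      generalize max (1/3) (t : ℝ) = r at *
      simp only [max_def, min_def]
      split_ifs <;> linarith)
    (by
      intro t y
      have := le_max_left (1/3) (t : ℝ)
      have h1 : max (1/3) (t : ℝ) ≤ 1 := max_le (by norm_num) t.2.2
      generalize max (1/3) (t : ℝ) = r at *
      rw [abs_le]
      exact ⟨le_max_of_le_left (by linarith), max_le (by linarith)
        (min_le_of_left_le (by linarith))⟩)
    (by
      intro t y hy
      have := le_max_left (1/3) (t : ℝ)
      generalize max (1/3) (t : ℝ) = r at *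
      rw [abs_le] at hy
      simp only
      rw [min_eq_right (by linarith), max_eq_right (by linarith)])
    (by
      intro t y hy
      have := le_max_left (1/3) (t : ℝ)
      generalize max (1/3) (t : ℝ) = r at *
      rw [le_abs] at *
      simp only [max_def, min_def]
      split_ifs <;> rcases hy with hy | hy <;>
        first | (left; linarith) | (right; linarith))
  refine ⟨G, ?_, ?_⟩
  · intro x
    obtain ⟨p, rfl⟩ := pr_surj x
    obtain ⟨h, e⟩ := hG 1 p
    rw [e]
    congr 1
    apply Subtype.ext
    obtain ⟨⟨x, y⟩, hp⟩ := p
    have h2 := (mem_R.1 hp).2.1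
    have e1 : max (1/3) ((1 : unitInterval) : ℝ) = 1 := max_eq_right (by simp; norm_num)
    simp only at h2
    simp only [Prod.mk.injEq, true_and, e1]
    rw [min_eq_right h2.2, max_eq_right h2.1]
  · intro t x
    obtain ⟨p, rfl⟩ := pr_surj x
    obtain ⟨h, e⟩ := hG t p
    rw [e, lev_pr, lev_pr]
    have := le_max_left (1/3) (t : ℝ)
    generalize max (1/3) (t : ℝ) = r at *
    show |max (-r) (min r p.1.2)| = _
    generalize p.1.2 = y
    simp only [max_def, min_def, abs_eq_max_neg]
    split_ifs <;> linarith

/-- The property kept along the homotopies. -/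
def KP (f : C(X, X)) : Prop := (∀ x ∈ C2, f x ∈ C1) ∧ ∃ c, ∀ x ∈ C1, f x = c

/-- Boundary goes to `C1`. -/
def BP (f : C(X, X)) : Prop := ∀ x ∈ Bd, f x ∈ C1

lemma hw {A B : Type*} [TopologicalSpace A] [TopologicalSpace B] {P : C(A, B) → Prop} {f g : C(A, B)}
    (H : C(unitInterval × A, B)) (h0 : ∀ x, H (0, x) = f x)
    (h1 : ∀ x, H (1, x) = g x) (hP : ∀ t, P ⟨fun x => H (t, x), by fun_prop⟩) :
    ContinuousMap.HomotopicWith f g P :=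
  ⟨{ toContinuousMap := H, map_zero_left := h0, map_one_left := h1, prop' := hP }⟩

lemma bh_of_hw {f g : C(X, X)} (h : ContinuousMap.HomotopicWith f g BP) :
    BoundaryHomotopic f g := by
  obtain ⟨H⟩ := h
  exact ⟨H.toHomotopy, fun x hx t => Or.inl (H.prop' t x hx)⟩

lemma step0 (f : C(X, X)) (hmaps : MapsTo f Bd C1)
    (h1 : Inessential (restrictMap f (hmaps.mono_left Set.subset_union_left : MapsTo f C1 C1))) :
    ∃ f1 : C(X, X), ContinuousMap.HomotopicWith f f1 BP ∧ ∃ c ∈ C1, ∀ x ∈ C1, f1 x = c := by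
  obtain ⟨b, ⟨h⟩⟩ := h1
  obtain ⟨S, S0, SC1, SC2, S1⟩ := exists_s
  let h' : unitInterval × X → X := fun a => open Classical in
    if hx : a.2 ∈ C1 then (h (a.1, ⟨a.2, hx⟩)).1 else f a.2
  have hh' : ContinuousOn h' (Prod.snd ⁻¹' C1) := by
    rw [continuousOn_iff_continuous_domRestrict]
    have : (Prod.snd ⁻¹' C1 : Set (unitInterval × X)).domRestrict h' =
        fun a => (h (a.1.1, ⟨a.1.2, a.2⟩)).1 := by
      funext a
      exact dif_pos a.2
    rw [this]
    fun_prop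
  have h'0 : ∀ x, x ∈ C1 → h' (0, x) = f x := by
    intro x hx
    simp only [h', dif_pos hx]
    rw [h.apply_zero]; rfl
  have h'1 : ∀ x, x ∈ C1 → h' (1, x) = b := by
    intro x hx
    simp only [h', dif_pos hx]
    rw [h.apply_one]; rfl
  have h'C : ∀ t x, x ∈ C1 → h' (t, x) ∈ C1 := by
    intro t x hx
    simp only [h', dif_pos hx]
    exact (h (t, ⟨x, hx⟩)).2
  let K : unitInterval × X → X := fun a => if lev a.2 ≤ 1/2 then f (S (1, a.2)) else
    h' (toI (a.1 * (2 * lev a.2 - 1)), S (1, a.2))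
  have hK : Continuous K := by
    refine continuous_if_le (by fun_prop) (by fun_prop) (by fun_prop) ?_ ?_
    · refine hh'.comp (by fun_prop) ?_
      intro a ha
      exact S1 _ ha
    · intro a ha
      rw [ha]
      norm_num [toI_zero]
      rw [h'0]
      exact S1 _ ha.ge
  have hKC1 : ∀ t, ∀ x ∈ C1, K (t, x) = h' (t, S (1, x)) := by
    intro t x hx
    rw [mem_C1] at hx
    simp only [K, hx]
    norm_num [toI_self]
  have hKC2 : ∀ t, ∀ x ∈ C2, K (t, x) = f x := by
    intro t x hx
    have := lev_C2 hx
    simp only [K]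
    rw [if_pos (by linarith), SC2 _ _ hx]
  refine ⟨⟨fun x => K (1, x), by fun_prop⟩, ?_, b, b.2, ?_⟩
  · refine (ContinuousMap.HomotopicWith.trans (g := ⟨fun x => f (S (1, x)), by fun_prop⟩) ?_ ?_)
    · refine hw ⟨fun a => f (S a), by fun_prop⟩ (fun x => by simp [S0]) (fun x => rfl) ?_
      rintro t x (hx | hx)
      · exact hmaps (Or.inl (SC1 t x hx))
      · show f (S (t, x)) ∈ _
        rw [SC2 t x hx]; exact hmaps (Or.inr hx)
    · refine hw ⟨K, hK⟩ (fun x => ?_) (fun x => rfl) ?_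
      · show K (0, x) = f (S (1, x))
        by_cases hx : lev x ≤ 1/2
        · simp only [K, if_pos hx]
        · simp only [K, if_neg hx]
          norm_num [toI_zero]
          rw [h'0]
          exact S1 _ (not_le.1 hx).le
      · rintro t x (hx | hx)
        · show K (t, x) ∈ _
          rw [hKC1 t x hx]
          exact h'C _ _ (SC1 _ _ hx)
        · show K (t, x) ∈ _
          rw [hKC2 t x hx]
          exact hmaps (Or.inr hx)
  · intro x hx
    show K (1, x) = b
    rw [hKC1 _ _ hx, h'1]
    exact SC1 _ _ hx

lemma final (f g0 : C(X, X)) (hF : ContinuousMap.HomotopicWith f g0 KP) (hg0 : ∀ x, g0 x ∈ C1)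
    (c : X) (hc : c ∈ C1) (hfc : ∀ x ∈ C1, f x = c) :
    ∃ g : C(X, X), ContinuousMap.HomotopicWith f g BP ∧
      (∃ a b : X, {x : X | g x = x} ⊆ {a, b}) ∧
      ∃ x₀ : X, {x : X | g x = x ∧ x ∉ Bd} = {x₀} := by
  obtain ⟨F⟩ := hF
  have F0 : ∀ x, F (0, x) = f x := F.apply_zero
  have F1 : ∀ x, F (1, x) ∈ C1 := fun x => by rw [F.apply_one]; exact hg0 x
  have FC2 : ∀ t, ∀ x ∈ C2, F (t, x) ∈ C1 := fun t x hx => (F.prop' t).1 x hx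
  have Fw : ∀ t, ∃ w, ∀ x ∈ C1, F (t, x) = w := fun t => (F.prop' t).2
  choose w hw' using Fw
  have hFc : Continuous F := F.continuous
  obtain ⟨S, S0, SC1, SC2, S1⟩ := exists_s
  obtain ⟨P, P1, Plev⟩ := exists_P
  have w0 : w 0 = c := by rw [← hw' 0 c hc, F0, hfc c hc]
  have w1 : lev (w 1) = 1 := by rw [← mem_C1, ← hw' 1 c hc]; exact F1 c
  let η : X → ℝ := fun x => min 1 (2 * (1 - lev x))
  have hη : Continuous η := by fun_prop
  let r : ℝ → ℝ := fun τ => max (1/3) (max (1 - 2 * τ) (2 * τ - 1))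
  have hr : Continuous r := by fun_prop
  let κ : ℝ → ℝ := fun τ => 3 * τ - 1
  have hκ : Continuous κ := by fun_prop
  have ηC1 : ∀ x ∈ C1, η x = 0 := by
    intro x hx
    rw [mem_C1] at hx
    simp [η, hx]
  have ηC2 : ∀ x ∈ C2, η x = 1 := by
    intro x hx
    have := lev_C2 hx
    simp only [η]
    rw [min_eq_left]; linarith
  have r1 : ∀ t : ℝ, toI (max (r 1) t) = 1 := fun t =>
    toI_of_ge (le_max_of_le_left (le_max_of_le_right (le_max_of_le_right (by norm_num))))
  have r0 : ∀ t : ℝ, toI (max (r 0) t) = 1 := fun t =>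
    toI_of_ge (le_max_of_le_left (le_max_of_le_right (le_max_of_le_left (by norm_num))))
  let H : unitInterval × X → X := fun a =>
    P (toI (max (r (η a.2)) (1 - a.1)), F (toI (κ (η a.2)), S (1, a.2)))
  have hH : Continuous H := by fun_prop
  have Hlo : ∀ t x, lev x ≤ 1/2 → H (t, x) = F (1, S (1, x)) := by
    intro t x hx
    have : η x = 1 := min_eq_left (by linarith)
    simp only [H, this, r1, P1]
    rw [toI_of_ge (show 1 ≤ κ 1 by simp only [κ]; norm_num)]
  have HC1 : ∀ t x, x ∈ C1 → H (t, x) = c := by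
    intro t x hx
    simp only [H, ηC1 x hx, r0, P1]
    rw [toI_of_le (show κ 0 ≤ 0 by simp only [κ]; norm_num), F0, hfc]
    exact SC1 _ _ hx
  let W : ℝ → X := fun τ => P (toI (r τ), w (toI (κ τ)))
  have rI : ∀ τ, 0 ≤ τ → τ ≤ 1 → max (1/3) (toI (r τ) : ℝ) = r τ := by
    intro τ h0 h1
    have h2 : 1/3 ≤ r τ := le_max_left _ _
    rw [toI_of_mem (by linarith)]
    · exact max_eq_right h2
    · exact max_le (by norm_num) (max_le (by linarith) (by linarith))
  have Hhi : ∀ x, 1/2 ≤ lev x → H (1, x) = W (2 * (1 - lev x)) := by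
    intro x hx
    have : η x = 2 * (1 - lev x) := min_eq_right (by linarith)
    simp only [H, this, W]
    rw [hw' _ _ (S1 x hx)]
    congr 3
    have : (0 : ℝ) ≤ r (2 * (1 - lev x)) := le_max_of_le_left (by norm_num)
    simpa using this
  have W0 : W 0 = c := by
    simp only [W]
    rw [toI_of_le (show κ 0 ≤ 0 by simp only [κ]; norm_num), w0, toI_of_ge, P1]
    exact le_max_of_le_right (le_max_of_le_left (by norm_num))
  have Wl : ∀ τ, 0 ≤ τ → τ ≤ 1 → lev (W τ) = 1 - τ / 2 → τ = 0 ∨ τ = 4/5 := by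
    intro τ h0 h1 h
    simp only [W, Plev] at h
    rw [rI τ h0 h1] at h
    have hle := min_le_left (r τ) (lev (w (toI (κ τ))))
    rw [h] at hle
    rcases le_total τ (2/3) with h2 | h2
    · left
      by_contra hne
      have hpos : 0 < τ := lt_of_le_of_ne h0 (Ne.symm hne)
      simp only [r, le_max_iff] at hle
      rcases hle with hle | hle | hle <;> linarith
    · rw [toI_of_ge (by simp only [κ]; linarith), w1] at h
      rcases le_total (r τ) 1 with h3 | h3
      · rw [min_eq_left h3] at h
        right
        have : r τ = 2 * τ - 1 := by
          simp only [r]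
          rw [max_eq_right (by linarith : 1 - 2 * τ ≤ 2 * τ - 1), max_eq_right (by linarith)]
        linarith
      · rw [min_eq_right h3] at h
        left; linarith
  have fixed : ∀ x, H (1, x) = x → x = c ∨ x = W (4/5) := by
    intro x hx
    rcases le_total (lev x) (1/2) with h | h
    · exfalso
      rw [Hlo 1 x h] at hx
      have := F1 (S (1, x))
      rw [hx, mem_C1] at this
      linarith
    · rw [Hhi x h] at hx
      have h1 := lev_le x
      rcases Wl (2 * (1 - lev x)) (by linarith) (by linarith) (by rw [hx]; ring) with h2 | h2
      · left; rw [← hx, h2, W0]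
      · right; rw [h2] at hx; exact hx.symm
  have W45 : lev (W (4/5)) = 3/5 := by
    simp only [W, Plev]
    rw [rI _ (by norm_num) (by norm_num), toI_of_ge (by simp only [κ]; norm_num), w1]
    simp only [r]
    norm_num
  refine ⟨⟨fun x => H (1, x), by fun_prop⟩, ?_, ⟨c, W (4/5), ?_⟩, W (4/5), ?_⟩
  · refine (ContinuousMap.HomotopicWith.trans (g := ⟨fun x => f (S (1, x)), by fun_prop⟩) ?_
      (ContinuousMap.HomotopicWith.trans
        (g := ⟨fun x => F (toI (κ (η x)), S (1, x)), by fun_prop⟩) ?_ ?_))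
    · refine hw ⟨fun a => f (S a), by fun_prop⟩ (fun x => by simp [S0]) (fun x => rfl) ?_
      rintro t x (hx | hx)
      · show f (S (t, x)) ∈ _
        rw [hfc _ (SC1 t x hx)]; exact hc
      · show f (S (t, x)) ∈ _
        rw [SC2 t x hx, ← F0]; exact FC2 0 x hx
    · refine hw ⟨fun a => F (toI (a.1 * κ (η a.2)), S (1, a.2)), by fun_prop⟩ (fun x => ?_)
        (fun x => ?_) ?_
      · show F (toI (0 * κ (η x)), S (1, x)) = f (S (1, x))
        rw [zero_mul, toI_zero, F0]
      · show F (toI (1 * κ (η x)), S (1, x)) = F (toI (κ (η x)), S (1, x))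
        rw [one_mul]
      · rintro t x (hx | hx)
        · show F (toI (t * κ (η x)), S (1, x)) ∈ _
          have ht := t.2.1
          rw [ηC1 x hx, toI_of_le (show t * κ 0 ≤ 0 by simp only [κ]; linarith), F0,
            hfc _ (SC1 _ x hx)]
          exact hc
        · show F (toI (t * κ (η x)), S (1, x)) ∈ _
          rw [SC2 1 x hx]; exact FC2 _ x hx
    · refine hw ⟨H, hH⟩ (fun x => ?_) (fun x => rfl) ?_
      · show P (toI (max (r (η x)) (1 - 0)), _) = _
        rw [toI_of_ge (le_max_of_le_right (by norm_num)), P1]; rfl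
      · rintro t x (hx | hx)
        · show H (t, x) ∈ _
          rw [HC1 t x hx]; exact hc
        · show H (t, x) ∈ _
          have := lev_C2 hx
          rw [Hlo t x (by linarith)]
          exact F1 _
  · intro x hx
    exact fixed x hx
  · ext x
    simp only [mem_singleton_iff]
    constructor
    · rintro ⟨hx, hb⟩
      rcases fixed x hx with h | h
      · exact absurd (Or.inl (h ▸ hc)) hb
      · exact h
    · rintro rfl
      constructor
      · show H (1, W (4/5)) = W (4/5)
        rw [Hhi _ (by rw [W45]; norm_num), W45]
        norm_num
      · rintro (h | h)
        · rw [mem_C1, W45] at h; norm_num at h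
        · have := lev_C2 h
          rw [W45] at this; norm_num at this

end PMB


namespace PMB

lemma cont_glue {A B : Type*} [TopologicalSpace A] [TopologicalSpace B] {s t : Set A}
    (hs : IsClosed s) (ht : IsClosed t) (hst : ∀ x, x ∈ s ∨ x ∈ t) {f : A → B}
    (hf : ContinuousOn f s) (hg : ContinuousOn f t) : Continuous f := by
  rw [← continuousOn_univ]
  have : (univ : Set A) = s ∪ t := by
    ext x; simpa using hst x
  rw [this]
  exact hf.union_of_isClosed hg hs ht

/-- The wedge of two circles. -/
def Rose : Set (UnitAddCircle × UnitAddCircle) := {q | q.1 = 0 ∨ q.2 = 0}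

/-- The real line onto the circle. -/
noncomputable def ee (t : ℝ) : UnitAddCircle := (t : UnitAddCircle)

@[fun_prop]
lemma continuous_ee : Continuous ee := AddCircle.continuous_mk' 1

@[simp] lemma ee_zero : ee 0 = 0 := rfl
@[simp] lemma ee_one : ee 1 = 0 := AddCircle.coe_period 1

/-- Clamp to `[0,1]`. -/
noncomputable def cl (u : ℝ) : ℝ := max 0 (min 1 u)
/-- Clamp to `[-1,1]`. -/
noncomputable def cl' (u : ℝ) : ℝ := max (-1) (min 1 u)

lemma cl_mem (u : ℝ) : 0 ≤ cl u ∧ cl u ≤ 1 :=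
  ⟨le_max_left _ _, max_le (by norm_num) (min_le_left _ _)⟩
lemma cl'_mem (u : ℝ) : -1 ≤ cl' u ∧ cl' u ≤ 1 :=
  ⟨le_max_left _ _, max_le (by norm_num) (min_le_left _ _)⟩
lemma cl_eq {u : ℝ} (h : 0 ≤ u) (h' : u ≤ 1) : cl u = u := by
  rw [cl, min_eq_right h', max_eq_right h]
lemma cl'_eq {u : ℝ} (h : -1 ≤ u) (h' : u ≤ 1) : cl' u = u := by
  rw [cl', min_eq_right h', max_eq_right h]
@[fun_prop] lemma continuous_cl : Continuous cl := by unfold cl; fun_prop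
@[fun_prop] lemma continuous_cl' : Continuous cl' := by unfold cl'; fun_prop

/-- top edge -/
noncomputable def tp (u : ℝ) : R := ⟨(cl u, 1), mem_R.2 ⟨cl_mem u, by norm_num, le_max_of_le_right (by norm_num)⟩⟩
/-- bottom edge -/
noncomputable def bt (u : ℝ) : R := ⟨(cl u, -1), mem_R.2 ⟨cl_mem u, by norm_num, le_max_of_le_right (by norm_num)⟩⟩
/-- left edge -/
noncomputable def lf (u : ℝ) : R := ⟨(0, cl' u), mem_R.2 ⟨by norm_num, cl'_mem u,
  le_max_of_le_left (by norm_num [abs_of_neg])⟩⟩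

lemma continuous_tp : Continuous tp := by unfold tp; fun_prop
lemma continuous_bt : Continuous bt := by unfold bt; fun_prop
lemma continuous_lf : Continuous lf := by unfold lf; fun_prop

/-- the curve going around `C1` -/
noncomputable def c1 (u : ℝ) : X := if u ≤ 1 then pr (tp u) else pr (bt (u - 1))
/-- the transversal curve -/
noncomputable def jj (u : ℝ) : X := if u ≤ 2 then pr (lf (1 - u)) else pr (bt (u - 2))

@[fun_prop]
lemma continuous_c1 : Continuous c1 := by
  refine continuous_if_le (by fun_prop) (by fun_prop)
    (continuous_pr.comp continuous_tp).continuousOn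
    (continuous_pr.comp (continuous_bt.comp (by fun_prop))).continuousOn ?_
  rintro x rfl
  rw [pr_eq]
  right; right
  simp [tp, bt, cl]

@[fun_prop]
lemma continuous_jj : Continuous jj := by
  refine continuous_if_le (by fun_prop) (by fun_prop)
    (continuous_pr.comp (continuous_lf.comp (by fun_prop))).continuousOn
    (continuous_pr.comp (continuous_bt.comp (by fun_prop))).continuousOn ?_
  rintro x rfl
  congr 1
  apply Subtype.ext
  simp only [lf, bt, cl, cl']
  norm_num

lemma c1_mem (u : ℝ) : c1 u ∈ C1 := by
  rw [mem_C1, c1]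
  split_ifs <;> rw [lev_pr] <;> simp [tp, bt]

lemma c1_top {u : ℝ} (h : 0 ≤ u) (h' : u ≤ 1) (p : R) (h1 : p.1.1 = u) (h2 : p.1.2 = 1) :
    c1 u = pr p := by
  rw [c1, if_pos h']
  congr 1
  apply Subtype.ext
  apply Prod.ext
  · simp [tp, cl_eq h h', h1]
  · simp [tp, h2]

lemma c1_bot {u : ℝ} (h : 0 ≤ u) (h' : u ≤ 1) (p : R) (h1 : p.1.1 = u) (h2 : p.1.2 = -1) :
    c1 (1 + u) = pr p := by
  rw [c1]
  split_ifs with h3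
  · have : u = 0 := by linarith
    subst this
    rw [pr_eq]
    right; right
    simp [tp, cl, h1, h2]
  · congr 1
    apply Subtype.ext
    apply Prod.ext
    · simp [bt, cl_eq h h', h1]
    · simp [bt, h2]

lemma jj_left {u : ℝ} (h : -1 ≤ u) (h' : u ≤ 1) (p : R) (h1 : p.1.1 = 0) (h2 : p.1.2 = u) :
    jj (1 - u) = pr p := by
  rw [jj, if_pos (by linarith)]
  congr 1
  apply Subtype.ext
  apply Prod.ext
  · simp [lf, h1]
  · simp [lf, h2, cl'_eq h h']

lemma jj_right {u : ℝ} (h : -1 ≤ u) (h' : u ≤ 1) (p : R) (h1 : p.1.1 = 1) (h2 : p.1.2 = u) :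
    jj (1 + u) = pr p := by
  rw [jj, if_pos (by linarith), pr_eq]
  right; left
  have : 1 - (1 + u) = - u := by ring
  simp [lf, h1, h2, this, cl'_eq (by linarith : -1 ≤ -u) (by linarith : -u ≤ 1)]

lemma c1_jj {t : ℝ} (h : 0 ≤ t) (h' : t ≤ 1) : c1 (1 + t) = jj (2 + t) := by
  rw [c1_bot h h' (bt t) (by simp [bt, cl_eq h h']) rfl, jj]
  split_ifs with h3
  · have : t = 0 := by linarith
    subst this
    congr 1
    apply Subtype.ext
    simp only [lf, bt, cl, cl']
    norm_num
  · congr 2; ring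

lemma c1_zero : c1 0 = jj 0 := by
  rw [← sub_self (1 : ℝ), jj_left (by norm_num) (by norm_num) (tp 0) (by simp [tp, cl]) (by simp [tp])]
  rw [sub_self]
  exact c1_top (by norm_num) (by norm_num) _ (by simp [tp, cl]) (by simp [tp])

lemma c1_two : c1 2 = c1 0 := by
  rw [← one_add_one_eq_two, c1_bot (by norm_num) (by norm_num) (bt 1) (by simp [bt, cl]) (by simp [bt])]
  rw [c1_top (by norm_num) (by norm_num) (tp 0) (by simp [tp, cl]) (by simp [tp]), pr_eq]
  right; right
  simp [tp, bt, cl]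

lemma jj_three : jj 3 = jj 0 := by
  rw [← c1_zero, ← c1_two, show (3 : ℝ) = 2 + 1 by norm_num, ← c1_jj (by norm_num) le_rfl]
  norm_num

/-- scale function -/
noncomputable def mm (p : ℝ × ℝ) : ℝ := max (2 * |p.1 - 1/2|) |p.2|

@[fun_prop] lemma continuous_mm : Continuous mm := by unfold mm; fun_prop

lemma mm_ge (p : R) : 1/4 ≤ mm p.1 := by
  obtain ⟨h1, h2, h3⟩ := mem_R.1 p.2
  rw [mm, le_max_iff]
  rcases le_max_iff.1 h3 with h | h
  · left; linarith
  · right; exact h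

lemma mm_le (p : R) : mm p.1 ≤ 1 := by
  obtain ⟨h1, h2, h3⟩ := mem_R.1 p.2
  refine max_le ?_ (abs_le.2 h2)
  have : |p.1.1 - 1/2| ≤ 1/2 := abs_le.2 ⟨by linarith, by linarith⟩
  linarith

/-- first coordinate of radial projection -/
noncomputable def ox (p : R) : ℝ := 1/2 + (p.1.1 - 1/2) / mm p.1
/-- second coordinate of radial projection -/
noncomputable def oy (p : R) : ℝ := p.1.2 / mm p.1

lemma mm_ne (p : R) : mm p.1 ≠ 0 := by have := mm_ge p; linarith

@[fun_prop] lemma continuous_ox : Continuous ox := by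
  unfold ox
  exact continuous_const.add ((by fun_prop : Continuous fun p : R => p.1.1 - 1/2).div
    (by fun_prop) mm_ne)
@[fun_prop] lemma continuous_oy : Continuous oy := by
  unfold oy
  exact (by fun_prop : Continuous fun p : R => p.1.2).div (by fun_prop) mm_ne

lemma o_prop (p : R) : (0 ≤ ox p ∧ ox p ≤ 1) ∧ (-1 ≤ oy p ∧ oy p ≤ 1) ∧
    ((ox p = 0 ∨ ox p = 1) ∨ (oy p = 1 ∨ oy p = -1)) := by
  have h0 : 0 < mm p.1 := by have := mm_ge p; linarith
  have h1 : 2 * |p.1.1 - 1/2| ≤ mm p.1 := le_max_left _ _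
  have h2 : |p.1.2| ≤ mm p.1 := le_max_right _ _
  have h1' : |(p.1.1 - 1/2) / mm p.1| ≤ 1/2 := by
    rw [abs_div, abs_of_pos h0, div_le_iff₀ h0]; linarith
  have h2' : |p.1.2 / mm p.1| ≤ 1 := by
    rw [abs_div, abs_of_pos h0, div_le_iff₀ h0]; linarith
  refine ⟨?_, abs_le.1 h2', ?_⟩
  · have := abs_le.1 h1'
    unfold ox
    constructor <;> linarith
  · rcases max_choice (2 * |p.1.1 - 1/2|) |p.1.2| with h | h
    · left
      have : |(p.1.1 - 1/2) / mm p.1| = 1/2 := by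
        rw [abs_div, abs_of_pos h0, div_eq_iff h0.ne']
        change mm p.1 = _ at h
        linarith
      unfold ox
      rcases eq_or_eq_neg_of_abs_eq this with h | h
      · right; linarith
      · left; linarith
    · right
      have : |p.1.2 / mm p.1| = 1 := by
        rw [abs_div, abs_of_pos h0, div_eq_iff h0.ne']
        change mm p.1 = _ at h
        linarith
      exact eq_or_eq_neg_of_abs_eq this

lemma mm_eq_one {p : R} (h : (p.1.1 = 0 ∨ p.1.1 = 1) ∨ (p.1.2 = 1 ∨ p.1.2 = -1)) :
    mm p.1 = 1 := by
  apply le_antisymm (mm_le p)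
  rw [mm, le_max_iff]
  rcases h with (h | h) | (h | h) <;> rw [h]
  · left; norm_num
  · left; norm_num
  · right; norm_num
  · right; norm_num

lemma ox_eq {p : R} (h : mm p.1 = 1) : ox p = p.1.1 := by
  rw [ox, h]; ring
lemma oy_eq {p : R} (h : mm p.1 = 1) : oy p = p.1.2 := by
  rw [oy, h]; ring

lemma o_mem (p : R) : (ox p, oy p) ∈ R := by
  obtain ⟨h1, h2, h3⟩ := o_prop p
  refine mem_R.2 ⟨h1, h2, ?_⟩
  simp only
  rw [le_max_iff]
  rcases h3 with (h | h) | (h | h) <;> rw [h]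
  · left; norm_num [abs_of_neg]
  · left; norm_num
  · right; norm_num
  · right; norm_num

/-- radial projection -/
noncomputable def oo (p : R) : R := ⟨(ox p, oy p), o_mem p⟩

/-- C1 preserved. -/
def QP (k : C(X, X)) : Prop := ∀ x ∈ C1, k x ∈ C1

lemma C1_pr {p : R} : pr p ∈ C1 ↔ p.1.2 = 1 ∨ p.1.2 = -1 := by
  rw [mem_C1, lev_pr, abs_eq (by norm_num)]

lemma radial : ∃ D : C(X, X), (∀ p, D (pr p) = pr (oo p)) ∧
    ContinuousMap.HomotopicWith (ContinuousMap.id X) D QP := by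
  have mu1 : ∀ (t : unitInterval) (p : R), 1 ≤ (1 - t) + t / mm p.1 := by
    intro t p
    have h0 : 0 < mm p.1 := by have := mm_ge p; linarith
    have h1 := mm_le p
    have : (t : ℝ) ≤ t / mm p.1 := by
      rw [le_div_iff₀ h0]
      have := mul_le_mul_of_nonneg_left h1 t.2.1
      linarith
    linarith
  have mem : ∀ (t : unitInterval) (p : R), (1/2 + ((1 - t) + t / mm p.1) * (p.1.1 - 1/2),
      ((1 - t) + t / mm p.1) * p.1.2) ∈ R := by
    intro t p
    have hm := mu1 t p
    have h0 : 0 < mm p.1 := by have := mm_ge p; linarith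
    have h1 := mm_le p
    have e : ((1 - t) + t / mm p.1) * mm p.1 ≤ 1 := by
      rw [add_mul, div_mul_cancel₀ _ h0.ne']
      have := mul_le_mul_of_nonneg_left h1 (sub_nonneg.2 t.2.2)
      linarith
    generalize (1 - t) + t / mm p.1 = μ at *
    have h2 : |μ * (p.1.1 - 1/2)| ≤ 1/2 := by
      rw [abs_mul, abs_of_pos (by linarith : 0 < μ)]
      have : 2 * |p.1.1 - 1/2| ≤ mm p.1 := le_max_left _ _
      nlinarith
    have h3 : |μ * p.1.2| ≤ 1 := by
      rw [abs_mul, abs_of_pos (by linarith : 0 < μ)]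
      have : |p.1.2| ≤ mm p.1 := le_max_right _ _
      nlinarith
    rw [mem_R]
    refine ⟨?_, abs_le.1 h3, ?_⟩
    · have := abs_le.1 h2
      constructor <;> simp only <;> linarith
    · have h4 := (mem_R.1 p.2).2.2
      simp only [add_sub_cancel_left]
      rw [abs_mul, abs_mul, abs_of_pos (by linarith : 0 < μ), le_max_iff]
      rcases le_max_iff.1 h4 with h | h
      · left; nlinarith
      · right; nlinarith
  obtain ⟨G, hG⟩ := descend (T := unitInterval)
    (fun a => pr ⟨(1/2 + ((1 - a.1) + a.1 / mm a.2.1) * (a.2.1.1 - 1/2),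
      ((1 - a.1) + a.1 / mm a.2.1) * a.2.1.2), mem a.1 a.2⟩)
    (by
      have : Continuous fun a : unitInterval × R => (a.1 : ℝ) / mm a.2.1 :=
        (by fun_prop : Continuous fun a : unitInterval × R => (a.1 : ℝ)).div (by fun_prop)
          (fun a => mm_ne a.2)
      exact continuous_pr.comp (by fun_prop))
    (by
      intro t p q h1 h2 h3
      rw [pr_eq]
      right; left
      simp only
      rw [mm_eq_one (Or.inl (Or.inl h1)), mm_eq_one (Or.inl (Or.inr h2)), h1, h2, h3]
      norm_num)
  refine ⟨⟨fun x => G (1, x), by fun_prop⟩, ?_, ?_⟩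
  · intro p
    show G (1, pr p) = _
    rw [hG]
    congr 1
    apply Subtype.ext
    apply Prod.ext
    · simp [oo, ox, div_eq_inv_mul]
    · simp [oo, oy, div_eq_inv_mul]
  · refine hw G ?_ (fun x => rfl) ?_
    · intro x
      obtain ⟨p, rfl⟩ := pr_surj x
      rw [hG]
      show _ = pr p
      congr 1
      apply Subtype.ext
      apply Prod.ext <;> simp
    · intro t x hx
      obtain ⟨p, rfl⟩ := pr_surj x
      show G (t, pr p) ∈ C1
      rw [C1_pr] at hx
      rw [hG, C1_pr]
      simp only
      rw [mm_eq_one (Or.inr hx)]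
      simpa using hx

lemma exists_kappa : ∃ κ : C(X, Rose),
    (∀ p : R, 0 ≤ oy p → (κ (pr p)).1.1 = ee (ox p)) ∧
    (∀ p : R, oy p ≤ 0 → (κ (pr p)).1.1 = 0) ∧
    (∀ p : R, ox p ≤ 1/2 → (κ (pr p)).1.2 = ee ((1 - oy p) / 2)) ∧
    (∀ p : R, 1/2 ≤ ox p → (κ (pr p)).1.2 = ee ((1 + oy p) / 2)) := by
  let z : R → UnitAddCircle := fun p => if oy p ≤ 0 then 0 else ee (ox p)
  let w : R → UnitAddCircle := fun p => if ox p ≤ 1/2 then ee ((1 - oy p) / 2) else ee ((1 + oy p)/2)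
  have z1 : ∀ p, oy p ≤ 0 → z p = 0 := fun p hp => if_pos hp
  have z0 : ∀ p, oy p = 0 → (0 : UnitAddCircle) = ee (ox p) := by
    intro p hp
    rcases (o_prop p).2.2 with (h | h) | (h | h)
    · rw [h, ee_zero]
    · rw [h, ee_one]
    · linarith
    · linarith
  have z2 : ∀ p, 0 ≤ oy p → z p = ee (ox p) := by
    intro p hp
    simp only [z]
    split_ifs with h
    · exact z0 p (le_antisymm h hp)
    · rfl
  have w0 : ∀ p, ox p = 1/2 → ee ((1 - oy p) / 2) = ee ((1 + oy p)/2) := by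
    intro p hp
    rcases (o_prop p).2.2 with (h | h) | (h | h)
    · linarith
    · linarith
    · rw [h]; norm_num
    · rw [h]; norm_num
  have w1 : ∀ p, ox p ≤ 1/2 → w p = ee ((1 - oy p)/2) := fun p hp => if_pos hp
  have w2 : ∀ p, 1/2 ≤ ox p → w p = ee ((1 + oy p)/2) := by
    intro p hp
    simp only [w]
    split_ifs with h
    · exact w0 p (le_antisymm h hp)
    · rfl
  have hz : Continuous z := Continuous.if_le (by fun_prop) (by fun_prop) (by fun_prop)
    (by fun_prop) z0
  have hwc : Continuous w := Continuous.if_le (by fun_prop) (by fun_prop) (by fun_prop)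
    (by fun_prop) w0
  have hR : ∀ p, (z p, w p) ∈ Rose := by
    intro p
    rcases (o_prop p).2.2 with (h | h) | (h | h)
    · left
      show z p = 0
      rcases le_total (oy p) 0 with h' | h'
      · exact z1 p h'
      · rw [z2 p h', h, ee_zero]
    · left
      show z p = 0
      rcases le_total (oy p) 0 with h' | h'
      · exact z1 p h'
      · rw [z2 p h', h, ee_one]
    · right
      show w p = 0
      rcases le_total (ox p) (1/2) with h' | h'
      · rw [w1 p h', h]; norm_num
      · rw [w2 p h', h]; norm_num
    · right
      show w p = 0
      rcases le_total (ox p) (1/2) with h' | h'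
      · rw [w1 p h', h]; norm_num
      · rw [w2 p h', h]; norm_num
  obtain ⟨G, hG⟩ := descend1 (fun p => (⟨(z p, w p), hR p⟩ : Rose)) (by fun_prop) (by
    intro p q h1 h2 h3
    have e1 := mm_eq_one (p := p) (Or.inl (Or.inl h1))
    have e2 := mm_eq_one (p := q) (Or.inl (Or.inr h2))
    have a1 := ox_eq e1
    have a2 := oy_eq e1
    have b1 := ox_eq e2
    have b2 := oy_eq e2
    rw [h1] at a1
    rw [h2] at b1
    apply Subtype.ext
    apply Prod.ext
    · show z p = z q
      have A : z p = 0 := by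
        rcases le_total (oy p) 0 with h' | h'
        · exact z1 p h'
        · rw [z2 p h', a1, ee_zero]
      have B : z q = 0 := by
        rcases le_total (oy q) 0 with h' | h'
        · exact z1 q h'
        · rw [z2 q h', b1, ee_one]
      rw [A, B]
    · show w p = w q
      rw [w1 p (by rw [a1]; norm_num), w2 q (by rw [b1]; norm_num), a2, b2, h3]
      congr 2; ring)
  refine ⟨G, ?_, ?_, ?_, ?_⟩
  · intro p hp; rw [hG]; exact z2 p hp
  · intro p hp; rw [hG]; exact z1 p hp
  · intro p hp; rw [hG]; exact w1 p hp
  · intro p hp; rw [hG]; exact w2 p hp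

lemma exists_circ (c : ℝ → X) (hc : Continuous c) (h : c 0 = c 1) :
    ∃ L : C(UnitAddCircle, X), ∀ t, 0 ≤ t → t ≤ 1 → L (ee t) = c t := by
  refine ⟨⟨AddCircle.liftIco 1 0 c, ?_⟩, ?_⟩
  · exact AddCircle.liftIco_zero_continuous h hc.continuousOn
  · intro t h0 h1
    rcases h1.lt_or_eq with h1 | rfl
    · exact AddCircle.liftIco_zero_coe_apply ⟨h0, h1⟩
    · rw [ee_one, ← h]
      exact AddCircle.liftIco_zero_coe_apply ⟨le_rfl, zero_lt_one⟩

lemma exists_ee (z : UnitAddCircle) : ∃ t, 0 ≤ t ∧ t < 1 ∧ ee t = z := by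
  have := AddCircle.coe_image_Ico_eq (p := (1 : ℝ)) 0
  have h : z ∈ ((↑) : ℝ → AddCircle (1:ℝ)) '' Ico 0 (0 + 1) := by rw [this]; trivial
  obtain ⟨t, ht, rfl⟩ := h
  exact ⟨t, ht.1, by simpa using ht.2, rfl⟩

lemma exists_lam : ∃ L : C(Rose, X),
    (∀ q : Rose, q.1.2 = 0 → ∀ t, 0 ≤ t → t ≤ 1 → q.1.1 = ee t → L q = c1 (2 * t)) ∧
    (∀ q : Rose, q.1.1 = 0 → ∀ t, 0 ≤ t → t ≤ 1 → q.1.2 = ee t → L q = jj (3 * t)) := by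
  obtain ⟨A, hA⟩ := exists_circ (fun t => c1 (2 * t)) (by fun_prop) (by simp [c1_two])
  obtain ⟨B, hB⟩ := exists_circ (fun t => jj (3 * t)) (by fun_prop) (by simp [jj_three])
  let L : Rose → X := fun q => open Classical in if q.1.2 = 0 then A q.1.1 else B q.1.2
  have L1 : ∀ q : Rose, q.1.2 = 0 → L q = A q.1.1 := fun q hq => if_pos hq
  have L2 : ∀ q : Rose, q.1.1 = 0 → L q = B q.1.2 := by
    intro q hq
    simp only [L]
    split_ifs with h
    · rw [hq, h, ← ee_zero, hA 0 le_rfl (by norm_num), hB 0 le_rfl (by norm_num)]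
      simp [c1_zero]
    · rfl
  refine ⟨⟨L, ?_⟩, ?_, ?_⟩
  · refine cont_glue (s := {q : Rose | q.1.2 = 0}) (t := {q : Rose | q.1.1 = 0}) ?_ ?_ ?_ ?_ ?_
    · exact isClosed_eq (by fun_prop) (by fun_prop)
    · exact isClosed_eq (by fun_prop) (by fun_prop)
    · intro q; exact q.2.symm
    · exact ContinuousOn.congr (f := fun q : Rose => A q.1.1) (by fun_prop) L1
    · exact ContinuousOn.congr (f := fun q : Rose => B q.1.2) (by fun_prop) L2
  · intro q hq t h0 h1 e
    show L q = _
    rw [L1 q hq, e, hA t h0 h1]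
  · intro q hq t h0 h1 e
    show L q = _
    rw [L2 q hq, e, hB t h0 h1]

set_option maxHeartbeats 1000000 in
/-- Comparison of the punctured Moebius band with the wedge of circles. -/
lemma model : ∃ (κ : C(X, Rose)) (L : C(Rose, X)),
    (∀ x ∈ C1, (κ x).1.2 = 0) ∧ (∀ q : Rose, q.1.2 = 0 → L q ∈ C1) ∧
    ContinuousMap.HomotopicWith (ContinuousMap.id X) (L.comp κ) QP := by
  obtain ⟨κ, k1, k2, k3, k4⟩ := exists_kappa
  obtain ⟨L, L1, L2⟩ := exists_lam
  obtain ⟨D, hD, hD'⟩ := radial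
  have kz0 : ∀ p, ox p = 0 ∨ ox p = 1 → (κ (pr p)).1.1 = 0 := by
    intro p hp
    rcases le_total (oy p) 0 with h' | h'
    · exact k2 p h'
    · rw [k1 p h']; rcases hp with h | h <;> rw [h] <;> simp
  have kw0 : ∀ p, oy p = 1 ∨ oy p = -1 → (κ (pr p)).1.2 = 0 := by
    intro p hp
    rcases le_total (ox p) (1/2) with h' | h'
    · rw [k3 p h']; rcases hp with h | h <;> rw [h] <;> norm_num
    · rw [k4 p h']; rcases hp with h | h <;> rw [h] <;> norm_num
  refine ⟨κ, L, ?_, ?_, hD'.trans ?_⟩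
  · intro x hx
    obtain ⟨p, rfl⟩ := pr_surj x
    rw [C1_pr] at hx
    apply kw0
    rwa [oy_eq (mm_eq_one (Or.inr hx))]
  · intro q hq
    obtain ⟨t, h0, h1, e⟩ := exists_ee q.1.1
    rw [L1 q hq t h0 h1.le e.symm]
    exact c1_mem _
  · let E : unitInterval × R → X := fun a =>
      open Classical in if oy a.2 = 1 then c1 ((1 + a.1) * ox a.2) else
      if oy a.2 = -1 then c1 ((1 - a.1) * (1 + ox a.2) + 2 * a.1) else
      if ox a.2 = 0 then jj ((1 - oy a.2) * (1 + a.1 / 2)) else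
      jj ((1 + oy a.2) * (1 + a.1 / 2))
    have Et : ∀ a, oy a.2 = 1 → E a = c1 ((1 + a.1) * ox a.2) := by
      intro a h; simp only [E, h, if_true]
    have Eb : ∀ a, oy a.2 = -1 → E a = c1 ((1 - a.1) * (1 + ox a.2) + 2 * a.1) := by
      intro a h; simp only [E, h, if_true]; rw [if_neg (by norm_num)]
    have El : ∀ a, ox a.2 = 0 → E a = jj ((1 - oy a.2) * (1 + a.1 / 2)) := by
      intro a h
      by_cases ht : oy a.2 = 1
      · rw [Et a ht, h, ht]; simp [c1_zero]
      by_cases hb : oy a.2 = -1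
      · rw [Eb a hb, h, hb]
        have := c1_jj a.1.2.1 a.1.2.2
        convert this using 2 <;> ring
      simp only [E, if_neg ht, if_neg hb, if_pos h]
    have Er : ∀ a, ox a.2 = 1 → E a = jj ((1 + oy a.2) * (1 + a.1 / 2)) := by
      intro a h
      by_cases ht : oy a.2 = 1
      · rw [Et a ht, h, ht]
        have := c1_jj a.1.2.1 a.1.2.2
        convert this using 2 <;> ring
      by_cases hb : oy a.2 = -1
      · rw [Eb a hb, h, hb]
        have : (1 - (a.1 : ℝ)) * (1 + 1) + 2 * a.1 = 2 := by ring
        rw [this, c1_two, c1_zero]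
        simp
      simp only [E, if_neg ht, if_neg hb, h]
      rw [if_neg (by norm_num)]
    have hE : Continuous E := by
      refine cont_glue (s := {a | ox a.2 = 0} ∪ {a | ox a.2 = 1})
        (t := {a | oy a.2 = 1} ∪ {a | oy a.2 = -1}) ?_ ?_ ?_ ?_ ?_
      · exact (isClosed_eq (by fun_prop) (by fun_prop)).union (isClosed_eq (by fun_prop) (by fun_prop))
      · exact (isClosed_eq (by fun_prop) (by fun_prop)).union (isClosed_eq (by fun_prop) (by fun_prop))
      · intro a; exact (o_prop a.2).2.2
      · refine ContinuousOn.union_of_isClosed ?_ ?_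
          (isClosed_eq (by fun_prop) (by fun_prop)) (isClosed_eq (by fun_prop) (by fun_prop))
        · exact ContinuousOn.congr (by fun_prop) El
        · exact ContinuousOn.congr (by fun_prop) Er
      · refine ContinuousOn.union_of_isClosed ?_ ?_
          (isClosed_eq (by fun_prop) (by fun_prop)) (isClosed_eq (by fun_prop) (by fun_prop))
        · exact ContinuousOn.congr (by fun_prop) Et
        · exact ContinuousOn.congr (by fun_prop) Eb
    obtain ⟨G, hG⟩ := descend (T := unitInterval) E hE (by
      intro t p q h1 h2 h3
      have e1 := mm_eq_one (p := p) (Or.inl (Or.inl h1))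
      have e2 := mm_eq_one (p := q) (Or.inl (Or.inr h2))
      have a1 := ox_eq e1
      have a2 := oy_eq e1
      have b1 := ox_eq e2
      have b2 := oy_eq e2
      rw [h1] at a1
      rw [h2] at b1
      rw [El (t, p) a1, Er (t, q) b1]
      simp only [a2, b2, h3]
      congr 2; ring)
    refine hw G ?_ ?_ ?_
    · intro x
      obtain ⟨p, rfl⟩ := pr_surj x
      obtain ⟨o1, o2, o3⟩ := o_prop p
      rw [hG, hD]
      rcases o3 with (h | h) | (h | h)
      · rw [El (0, p) h]
        simp
        exact jj_left o2.1 o2.2 _ h rfl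
      · rw [Er (0, p) h]
        simp
        exact jj_right o2.1 o2.2 _ h rfl
      · rw [Et (0, p) h]
        simp
        exact c1_top o1.1 o1.2 _ rfl h
      · rw [Eb (0, p) h]
        simp
        exact c1_bot o1.1 o1.2 _ rfl h
    · intro x
      obtain ⟨p, rfl⟩ := pr_surj x
      obtain ⟨o1, o2, o3⟩ := o_prop p
      rw [hG]
      show _ = L (κ (pr p))
      rcases o3 with (h | h) | (h | h)
      · rw [El (1, p) h, L2 (κ (pr p)) (kz0 p (Or.inl h)) ((1 - oy p) / 2) (by linarith)
          (by linarith) (k3 p (by rw [h]; norm_num))]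
        congr 1
        simp; ring
      · rw [Er (1, p) h, L2 (κ (pr p)) (kz0 p (Or.inr h)) ((1 + oy p) / 2) (by linarith)
          (by linarith) (k4 p (by rw [h]; norm_num))]
        congr 1
        simp; ring
      · rw [Et (1, p) h, L1 (κ (pr p)) (kw0 p (Or.inl h)) (ox p) o1.1 o1.2
          (k1 p (by rw [h]; norm_num))]
        congr 1
        simp; left; norm_num
      · rw [Eb (1, p) h, L1 (κ (pr p)) (kw0 p (Or.inr h)) 0 le_rfl (by norm_num)
          (by rw [k2 p (by rw [h]; norm_num), ee_zero])]
        simp [c1_two]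
    · intro t x hx
      obtain ⟨p, rfl⟩ := pr_surj x
      show G (t, pr p) ∈ C1
      rw [hG]
      rw [C1_pr] at hx
      rw [← oy_eq (mm_eq_one (Or.inr hx))] at hx
      rcases hx with h | h
      · rw [Et (t, p) h]; exact c1_mem _
      · rw [Eb (t, p) h]; exact c1_mem _

end PMB


namespace PMB

/-- Letters: generator `false` is `c`, generator `true` is `a`. -/
abbrev Ltr := Bool × Bool

/-- inverse letter -/
def linv (l : Ltr) : Ltr := (l.1, !l.2)

@[simp] lemma linv_linv (l : Ltr) : linv (linv l) = l := by simp [linv]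
@[simp] lemma linv_fst (l : Ltr) : (linv l).1 = l.1 := rfl
lemma linv_ne (l : Ltr) : linv l ≠ l := by
  intro h
  have := congrArg Prod.snd h
  simp [linv] at this

/-- Reduced words not ending with a `c`-letter. -/
def good : List Ltr → Prop
  | [] => True
  | [h] => h.1 = true
  | h :: k :: T => k ≠ linv h ∧ good (k :: T)

lemma good_tail {h : Ltr} {T : List Ltr} (H : good (h :: T)) : good T := by
  cases T with
  | nil => trivial
  | cons k T => exact H.2

/-- Action of a letter. -/
def act (l : Ltr) : List Ltr → List Ltr
  | [] => if l.1 = false then [] else [l]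
  | h :: T => if h = linv l then T else l :: h :: T

lemma act_nil (l : Ltr) : act l [] = if l.1 = false then [] else [l] := rfl
lemma act_cons (l h : Ltr) (T : List Ltr) :
    act l (h :: T) = if h = linv l then T else l :: h :: T := rfl

lemma act_good (l : Ltr) {L : List Ltr} (H : good L) : good (act l L) := by
  cases L with
  | nil =>
    simp only [act]
    split_ifs with h
    · trivial
    · simpa [good] using h
  | cons h T =>
    simp only [act]
    split_ifs with h'
    · exact good_tail H
    · exact ⟨h', H⟩

lemma act_act (l : Ltr) {L : List Ltr} (H : good L) : act (linv l) (act l L) = L := by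
  cases L with
  | nil =>
    by_cases h : l.1 = false
    · rw [act_nil, if_pos h, act_nil, linv_fst, if_pos h]
    · rw [act_nil, if_neg h, act_cons, linv_linv, if_pos rfl]
  | cons h T =>
    by_cases h' : h = linv l
    · rw [act_cons, if_pos h']
      subst h'
      cases T with
      | nil =>
        have : l.1 = true := H
        rw [act_nil, if_neg (by simp [this])]
      | cons k T =>
        have : k ≠ linv (linv l) := H.1
        rw [act_cons, if_neg this]
    · rw [act_cons, if_neg h', act_cons, linv_linv, if_pos rfl]

/-- Vertices of the cover. -/
@[ext]
structure V where
  /-- the word -/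
  val : List Ltr
  /-- it is reduced -/
  prop : good val

instance : TopologicalSpace V := ⊥
instance : DiscreteTopology V := ⟨rfl⟩

/-- root vertex -/
def root : V := ⟨[], trivial⟩

/-- Action of letters on vertices. -/
def lact (l : Ltr) (v : V) : V := ⟨act l v.1, act_good l v.prop⟩

lemma lact_lact (l : Ltr) (v : V) : lact (linv l) (lact l v) = v := V.ext (act_act l v.prop)

/-- Action of generators. -/
def gact (g : Bool) : Equiv.Perm V where
  toFun := lact (g, true)
  invFun := lact (g, false)
  left_inv v := lact_lact (g, true) v
  right_inv v := lact_lact (g, false) v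

/-- The permutation representation. -/
def rho : FreeGroup Bool →* Equiv.Perm V := FreeGroup.lift gact

lemma rho_of (g : Bool) : rho (FreeGroup.of g) = gact g := FreeGroup.lift_apply_of

/-- The letter as a group element -/
def lel (l : Ltr) : FreeGroup Bool := if l.2 then FreeGroup.of l.1 else (FreeGroup.of l.1)⁻¹

lemma rho_lel (l : Ltr) (v : V) : rho (lel l) v = lact l v := by
  obtain ⟨g, s⟩ := l
  cases s
  · simp only [lel, map_inv, rho_of]; rfl
  · simp only [lel, rho_of]; rfl

/-- product of a word -/
def wel : List Ltr → FreeGroup Bool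
  | [] => 1
  | h :: T => lel h * wel T

lemma lel_linv (l : Ltr) : lel (linv l) = (lel l)⁻¹ := by
  obtain ⟨g, s⟩ := l
  cases s <;> simp [lel, linv]

lemma lact_cons {h : Ltr} {T : List Ltr} (H : good (h :: T)) :
    lact h ⟨T, good_tail H⟩ = ⟨h :: T, H⟩ := by
  apply V.ext
  cases T with
  | nil =>
    have : h.1 = true := H
    simp [lact, act, this]
  | cons k T => simp [lact, act, H.1]

lemma rho_wel (v : V) : rho (wel v.1) root = v := by
  obtain ⟨L, H⟩ := v
  induction L with
  | nil => simp [wel]; rfl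
  | cons h T ih =>
    simp only [wel, map_mul, Equiv.Perm.mul_apply]
    rw [ih (good_tail H), rho_lel, lact_cons]

/-- The subgroup generated by `c`. -/
def Cg : Subgroup (FreeGroup Bool) := Subgroup.zpowers (FreeGroup.of false)

lemma wel_act (l : Ltr) (L : List Ltr) : (lel l * wel L)⁻¹ * wel (act l L) ∈ Cg := by
  cases L with
  | nil =>
    simp only [act]
    split_ifs with h
    · simp only [wel, mul_one, inv_mem_iff]
      obtain ⟨g, s⟩ := l
      simp only at h
      subst h
      cases s
      · simp only [lel]; exact inv_mem (Subgroup.mem_zpowers _)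
      · simp only [lel]; exact Subgroup.mem_zpowers _
    · simp [wel]
  | cons h T =>
    simp only [act]
    split_ifs with h'
    · subst h'
      simp [wel, lel_linv]
    · simp [wel]

lemma wel_gact (g : Bool) (v : V) : (FreeGroup.of g * wel v.1)⁻¹ * wel (gact g v).1 ∈ Cg := by
  have := wel_act (g, true) v.1
  exact this

lemma rho_coset (x : FreeGroup Bool) : ∀ v : V, (x * wel v.1)⁻¹ * wel (rho x v).1 ∈ Cg := by
  have hmul : ∀ x y : FreeGroup Bool, (∀ v : V, (x * wel v.1)⁻¹ * wel (rho x v).1 ∈ Cg) →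
      (∀ v : V, (y * wel v.1)⁻¹ * wel (rho y v).1 ∈ Cg) →
      ∀ v : V, ((x * y) * wel v.1)⁻¹ * wel (rho (x * y) v).1 ∈ Cg := by
    intro x y hx hy v
    have h1 := hx (rho y v)
    have h2 := hy v
    have := mul_mem h2 h1
    convert this using 1
    simp only [map_mul, Equiv.Perm.mul_apply]
    group
  induction x using FreeGroup.induction_on with
  | C1 => intro v; simp
  | of g => intro v; rw [rho_of]; exact wel_gact g v
  | inv_of g h =>
    intro v
    have := h ((rho (FreeGroup.of g)⁻¹) v)
    rw [← Equiv.Perm.mul_apply, ← map_mul, mul_inv_cancel, map_one, Equiv.Perm.one_apply] at this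
    have := inv_mem this
    convert this using 1
    group
  | mul x y hx hy => exact hmul x y hx hy

lemma stab_root {x : FreeGroup Bool} (h : rho x root = root) : x ∈ Cg := by
  have := rho_coset x root
  rw [h] at this
  simpa [root, wel] using this

lemma Cg_root {x : FreeGroup Bool} (h : x ∈ Cg) : rho x root = root := by
  have : Cg ≤ (MulAction.stabilizer (Equiv.Perm V) root).comap rho := by
    rw [Cg, Subgroup.zpowers_le, Subgroup.mem_comap, MulAction.mem_stabilizer_iff, rho_of]
    rfl
  exact this h

lemma no_swap {x : FreeGroup Bool} {e1 e2 : V} (h1 : rho x e1 = e2) (h2 : rho x e2 = e1) :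
    e1 = e2 := by
  set w := wel e1.1 with hwd
  have hw1 : rho w root = e1 := rho_wel e1
  set y := w⁻¹ * x * w with hy
  have hyy : rho (y ^ 2) root = root := by
    have : y ^ 2 = w⁻¹ * (x * (x * w)) := by rw [hy, pow_two]; group
    rw [this]
    simp only [map_mul, Equiv.Perm.mul_apply]
    rw [hw1, h1, h2, ← hw1, ← Equiv.Perm.mul_apply, ← map_mul]
    simp
  obtain ⟨n, hn⟩ := stab_root hyy
  simp only at hn
  let φ : FreeGroup Bool →* Multiplicative ℤ := FreeGroup.lift (fun _ => Multiplicative.ofAdd 1)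
  have hφ := congrArg (fun g => Multiplicative.toAdd (φ g)) hn
  simp [φ] at hφ
  set k := Multiplicative.toAdd (φ y) with hk
  have hk2 : n = 2 * k := by simpa [φ, hk] using hφ
  have : (FreeGroup.of false ^ k) ^ 2 = y ^ 2 := by
    rw [← hn, hk2, ← zpow_natCast, ← zpow_mul]; congr 1; push_cast; ring
  have hyk : FreeGroup.of false ^ k = y := pow_left_injective (two_ne_zero) this
  have hyC : y ∈ Cg := ⟨k, hyk⟩
  have h3 := Cg_root hyC
  have hxw : x = w * y * w⁻¹ := by rw [hy]; group
  rw [← h1, hxw]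
  simp only [map_mul, Equiv.Perm.mul_apply]
  have : rho w⁻¹ e1 = root := by
    rw [← hw1, ← Equiv.Perm.mul_apply, ← map_mul]; simp
  rw [this, h3, hw1]

/-- The three possibilities for an edge. -/
lemma edge_cases (l : Ltr) (v : V) : (v = root ∧ l.1 = false ∧ lact l v = root) ∨
    ((lact l v).1 = l :: v.1) ∨ (v.1 = linv l :: (lact l v).1) := by
  obtain ⟨L, H⟩ := v
  cases L with
  | nil =>
    by_cases h : l.1 = false
    · left
      refine ⟨rfl, h, ?_⟩
      apply V.ext
      simp [lact, act, h, root]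
    · right; left
      simp [lact, act, h]
  | cons h T =>
    right
    by_cases h' : h = linv l
    · right; simp [lact, act, h']
    · left; simp [lact, act, h']

end PMB


namespace PMB

open Filter Topology

/-- coordinate in `[-1/2, 1/2)` -/
noncomputable def al (z : UnitAddCircle) : ℝ := (AddCircle.equivIco (1:ℝ) (-1/2) z : ℝ)

/-- coordinate in `[0, 1)` -/
noncomputable def th (z : UnitAddCircle) : ℝ := (AddCircle.equivIco (1:ℝ) 0 z : ℝ)

lemma al_ge (z) : -1/2 ≤ al z := (AddCircle.equivIco (1:ℝ) (-1/2) z).2.1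
lemma al_lt (z) : al z < 1/2 := by
  have := (AddCircle.equivIco (1:ℝ) (-1/2) z).2.2
  unfold al; linarith
lemma th_ge (z) : 0 ≤ th z := (AddCircle.equivIco (1:ℝ) 0 z).2.1
lemma th_lt (z) : th z < 1 := by
  have := (AddCircle.equivIco (1:ℝ) 0 z).2.2
  unfold th; linarith
lemma ee_al (z) : ee (al z) = z := AddCircle.coe_equivIco
lemma ee_th (z) : ee (th z) = z := AddCircle.coe_equivIco

lemma al_ee {t : ℝ} (h0 : -1/2 ≤ t) (h1 : t < 1/2) : al (ee t) = t := by
  unfold al ee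
  exact AddCircle.equivIco_coe_of_mem ⟨h0, by linarith⟩

lemma th_ee {t : ℝ} (h0 : 0 ≤ t) (h1 : t < 1) : th (ee t) = t := by
  unfold th ee
  exact AddCircle.equivIco_coe_of_mem ⟨h0, by linarith⟩

lemma al_zero : al 0 = 0 := by rw [← ee_zero]; exact al_ee (by norm_num) (by norm_num)
lemma th_zero : th 0 = 0 := by rw [← ee_zero]; exact th_ee (by norm_num) (by norm_num)

lemma al_ne {z : UnitAddCircle} (h : z ≠ 0) : al z ≠ 0 := by
  intro h'
  apply h
  rw [← ee_al z, h', ee_zero]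

lemma ee_add_one (t : ℝ) : ee (t + 1) = ee t := by
  unfold ee; exact AddCircle.coe_add_period 1 t

lemma th_of_neg {z} (h : al z < 0) : th z = al z + 1 := by
  conv_lhs => rw [← ee_al z, ← ee_add_one]
  exact th_ee (by linarith [al_ge z]) (by linarith)

lemma th_of_nonneg {z} (h : 0 ≤ al z) : th z = al z := by
  conv_lhs => rw [← ee_al z]
  exact th_ee h (by linarith [al_lt z])

lemma al_cont {z} (h : z ≠ ee (-1/2)) : ContinuousAt al z :=
  continuous_subtype_val.continuousAt.comp (AddCircle.continuousAt_equivIco 1 (-1/2) h)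

lemma th_cont {z} (h : z ≠ 0) : ContinuousAt th z :=
  continuous_subtype_val.continuousAt.comp (AddCircle.continuousAt_equivIco 1 0
    (by simpa using h))

/-- first coordinate -/
def rz (y : Rose) : UnitAddCircle := y.1.1
/-- second coordinate -/
def rw' (y : Rose) : UnitAddCircle := y.1.2

@[fun_prop] lemma continuous_rz : Continuous rz := by unfold rz; fun_prop
@[fun_prop] lemma continuous_rw : Continuous rw' := by unfold rw'; fun_prop

lemma rose_or (y : Rose) : rz y = 0 ∨ rw' y = 0 := y.2

lemma ev_z {y : Rose} (h : rz y ≠ 0) : ∀ᶠ x in 𝓝 y, rz x ≠ 0 ∧ rw' x = 0 := by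
  have : ∀ᶠ x in 𝓝 y, rz x ≠ 0 := continuous_rz.continuousAt.eventually_ne h
  filter_upwards [this] with x hx
  exact ⟨hx, (rose_or x).resolve_left hx⟩

lemma ev_w {y : Rose} (h : rw' y ≠ 0) : ∀ᶠ x in 𝓝 y, rw' x ≠ 0 ∧ rz x = 0 := by
  have : ∀ᶠ x in 𝓝 y, rw' x ≠ 0 := continuous_rw.continuousAt.eventually_ne h
  filter_upwards [this] with x hx
  exact ⟨hx, (rose_or x).resolve_right hx⟩

/-- chart domains -/
def UU (i : Bool) : Set Rose :=
  if i then {y | rz y ≠ 0 ∨ rw' y ≠ 0} else {y | rz y ≠ ee (-1/2) ∧ rw' y ≠ ee (-1/2)}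

lemma UU_open (i : Bool) : IsOpen (UU i) := by
  cases i
  · simp only [UU]
    exact (isOpen_ne.preimage continuous_rz).inter (isOpen_ne.preimage continuous_rw)
  · simp only [UU]
    exact (isOpen_ne.preimage continuous_rz).union (isOpen_ne.preimage continuous_rw)

/-- transition element -/
noncomputable def gam (y : Rose) : FreeGroup Bool :=
  if al (rz y) < 0 then FreeGroup.of false else if al (rw' y) < 0 then FreeGroup.of true else 1

lemma neg_ev {f : Rose → UnitAddCircle} (hf : Continuous f) {y : Rose} (h0 : f y ≠ 0)
    (h1 : f y ≠ ee (-1/2)) : ∀ᶠ x in 𝓝 y, (al (f x) < 0 ↔ al (f y) < 0) := by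
  have hc : ContinuousAt (fun x => al (f x)) y :=
    ContinuousAt.comp (g := al) (al_cont h1) hf.continuousAt
  rcases lt_or_gt_of_ne (al_ne h0) with h | h
  · filter_upwards [hc.eventually_lt_const h] with x hx
    exact ⟨fun _ => h, fun _ => hx⟩
  · filter_upwards [hc.eventually_const_lt h] with x hx
    exact ⟨fun h' => absurd h' (not_lt.2 hx.le), fun h' => absurd h' (not_lt.2 h.le)⟩

lemma gam_ev {y : Rose} (h0 : y ∈ UU false) (h1 : y ∈ UU true) : ∀ᶠ x in 𝓝 y, gam x = gam y := by
  simp only [UU] at h0 h1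
  rcases h1 with h | h
  · have hy := (ev_z h).self_of_nhds
    filter_upwards [ev_z h, neg_ev continuous_rz h h0.1] with x hx hx'
    simp [gam, hx', hx.2, hy.2]
  · have hy := (ev_w h).self_of_nhds
    filter_upwards [ev_w h, neg_ev continuous_rw h h0.2] with x hx hx'
    simp [gam, hx', hx.2, hy.2]

/-- gauge -/
noncomputable def ga (i : Bool) (y : Rose) : FreeGroup Bool := if i then 1 else gam y

lemma ga_ev (i j : Bool) {y : Rose} (h0 : y ∈ UU i) (h1 : y ∈ UU j) :
    ∀ᶠ x in 𝓝 y, ga j x * (ga i x)⁻¹ = ga j y * (ga i y)⁻¹ := by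
  cases i <;> cases j
  · simp
  · filter_upwards [gam_ev h0 h1] with x hx
    simp [ga, hx]
  · filter_upwards [gam_ev h1 h0] with x hx
    simp [ga, hx]
  · simp

lemma disc_cont {Z : Type*} [TopologicalSpace Z] {F : Rose × V → Z} {y : Rose} {b : V}
    (h : ContinuousAt (fun x => F (x, b)) y) : ContinuousAt F (y, b) := by
  unfold ContinuousAt at *
  rw [nhds_prod_eq, nhds_discrete V, Filter.prod_pure, tendsto_map'_iff]
  exact h

open Classical in
/-- The bundle core of the cover. -/
noncomputable def core : FiberBundleCore Bool Rose V where
  baseSet := UU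
  isOpen_baseSet := UU_open
  indexAt y := if rz y ≠ 0 ∨ rw' y ≠ 0 then true else false
  mem_baseSet_at y := by
    by_cases h : rz y ≠ 0 ∨ rw' y ≠ 0
    · rw [if_pos h]; exact h
    · rw [if_neg h]
      push Not at h
      have : (0 : UnitAddCircle) ≠ ee (-1/2) := by
        intro h
        have := al_ee (t := -1/2) (by norm_num) (by norm_num)
        rw [← h, al_zero] at this
        norm_num at this
      simp [UU, h.1, h.2, this]
  coordChange i j y b := rho (ga j y * (ga i y)⁻¹) b
  coordChange_self i y _ v := by simp
  continuousOn_coordChange i j := by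
    rintro ⟨y, b⟩ hp
    apply ContinuousAt.continuousWithinAt
    apply disc_cont
    refine ContinuousAt.congr (f := fun _ => rho (ga j y * (ga i y)⁻¹) b) continuousAt_const ?_
    filter_upwards [ga_ev i j hp.1.1 hp.1.2] with x hx
    simp only [hx]
  coordChange_comp i j k y _ v := by
    rw [← Equiv.Perm.mul_apply, ← map_mul]
    congr 2
    group

/-- The covering space. -/
abbrev EE := Bundle.TotalSpace V core.Fiber

/-- constructor -/
def mkE (y : Rose) (b : V) : EE := ⟨y, b⟩

/-- fibre coordinate -/
def fc (p : EE) : V := p.2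

lemma cov : IsCoveringMap (Bundle.TotalSpace.proj : EE → Rose) :=
  FiberBundle.isCoveringMap (F := V) (E := core.Fiber)

lemma ga_index (y : Rose) : ga (core.indexAt y) y = 1 := by
  by_cases h : rz y ≠ 0 ∨ rw' y ≠ 0
  · simp only [core, if_pos h]; rfl
  · simp only [core, if_neg h]
    push Not at h
    simp [ga, gam, h.1, h.2, al_zero]

lemma triv_apply (i : Bool) (p : EE) : core.localTriv i p = (p.1, rho (ga i p.1) (fc p)) := by
  rw [FiberBundleCore.localTriv_apply]
  change (p.1, rho (ga i p.1 * (ga (core.indexAt p.1) p.1)⁻¹) p.2) = _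
  rw [ga_index]; simp [fc]

lemma triv_cont (i : Bool) {p : EE} (h : p.1 ∈ UU i) : ContinuousAt (core.localTriv i) p :=
  (core.localTriv i).continuousAt ((core.mem_localTriv_source i p).2 h)

/-- local constancy of the chart coordinate -/
lemma fc_ev (i : Bool) {p : EE} (h : p.1 ∈ UU i) :
    ∀ᶠ q in 𝓝 p, rho (ga i q.1) (fc q) = rho (ga i p.1) (fc p) := by
  have h1 := (triv_cont i h).snd
  have h2 := h1.eventually (by rw [nhds_discrete]; exact mem_pure.2 (rfl : _ = _) :
    ∀ᶠ v in 𝓝 ((core.localTriv i p).2), v = (core.localTriv i p).2)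
  filter_upwards [h2] with q hq
  simpa only [triv_apply] using hq

lemma mem_UU (y : Rose) : y ∈ UU false ∨ y ∈ UU true := by
  have := core.mem_baseSet_at y
  rcases h : core.indexAt y with _ | _
  · left; rw [h] at this; exact this
  · right; rw [h] at this; exact this

@[fun_prop]
lemma continuous_pj : Continuous (Bundle.TotalSpace.proj : EE → Rose) := cov.continuous

lemma contE {Z : Type*} [TopologicalSpace Z] {f : EE → Z} (F0 F1 : Rose → V → Z)
    (c0 : ∀ b, ∀ y ∈ UU false, ContinuousAt (fun y => F0 y b) y)
    (c1 : ∀ b, ∀ y ∈ UU true, ContinuousAt (fun y => F1 y b) y)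
    (h0 : ∀ p : EE, p.1 ∈ UU false → f p = F0 p.1 (rho (gam p.1) (fc p)))
    (h1 : ∀ p : EE, p.1 ∈ UU true → f p = F1 p.1 (fc p)) : Continuous f := by
  rw [continuous_iff_continuousAt]
  intro p
  rcases mem_UU p.1 with h | h
  · have hc : ContinuousAt (fun q : EE => F0 q.1 (rho (gam p.1) (fc p))) p :=
      ContinuousAt.comp (g := fun y => F0 y (rho (gam p.1) (fc p))) (c0 _ _ h)
        continuous_pj.continuousAt
    refine hc.congr ?_
    filter_upwards [fc_ev false h, continuous_pj.continuousAt.eventually ((UU_open false).mem_nhds h)]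
      with q hq hq'
    have : rho (gam q.1) (fc q) = rho (gam p.1) (fc p) := hq
    rw [h0 q hq', this]
  · have hc : ContinuousAt (fun q : EE => F1 q.1 (fc p)) p :=
      ContinuousAt.comp (g := fun y => F1 y (fc p)) (c1 _ _ h)
        continuous_pj.continuousAt
    refine hc.congr ?_
    filter_upwards [fc_ev true h, continuous_pj.continuousAt.eventually ((UU_open true).mem_nhds h)]
      with q hq hq'
    have : fc q = fc p := by simpa [ga] using hq
    rw [h1 q hq', this]

end PMB


namespace PMB

open Filter Topology

/-- the edge at `b` in direction `g` -/
def step (g : Bool) (b : V) : V := lact (g, true) b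

/-- backwards edge -/
def bstep (g : Bool) (b : V) : V := lact (g, false) b

lemma bstep_step (g : Bool) (b : V) : bstep g (step g b) = b := lact_lact (g, true) b

/-- Linear interpolation of a function on the vertices. -/
noncomputable def terp (ψ : V → ℝ) (p : EE) : ℝ :=
  ψ (fc p) + th (rz p.1) * (ψ (step false (fc p)) - ψ (fc p))
    + th (rw' p.1) * (ψ (step true (fc p)) - ψ (fc p))

lemma th_contAt_z {y : Rose} (h : y ∈ UU true) : ContinuousAt (fun y => th (rz y)) y := by
  rcases h with h | h
  · exact ContinuousAt.comp (g := th) (th_cont h) continuous_rz.continuousAt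
  · refine ContinuousAt.congr (f := fun _ => th 0) continuousAt_const ?_
    filter_upwards [ev_w h] with x hx
    rw [hx.2]

lemma th_contAt_w {y : Rose} (h : y ∈ UU true) : ContinuousAt (fun y => th (rw' y)) y := by
  rcases h with h | h
  · refine ContinuousAt.congr (f := fun _ => th 0) continuousAt_const ?_
    filter_upwards [ev_z h] with x hx
    rw [hx.2]
  · exact ContinuousAt.comp (g := th) (th_cont h) continuous_rw.continuousAt

lemma gam_cases (y : Rose) : (al (rz y) < 0 ∧ rw' y = 0 ∧ gam y = FreeGroup.of false) ∨
    (al (rw' y) < 0 ∧ rz y = 0 ∧ gam y = FreeGroup.of true) ∨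
    (0 ≤ al (rz y) ∧ 0 ≤ al (rw' y) ∧ gam y = 1) := by
  unfold gam
  split_ifs with h h'
  · left
    refine ⟨h, (rose_or y).resolve_left ?_, rfl⟩
    intro h0; rw [h0, al_zero] at h; exact lt_irrefl _ h
  · right; left
    refine ⟨h', (rose_or y).resolve_right ?_, rfl⟩
    intro h0; rw [h0, al_zero] at h'; exact lt_irrefl _ h'
  · right; right
    exact ⟨not_lt.1 h, not_lt.1 h', rfl⟩

lemma rho_step (g : Bool) (b : V) : rho (FreeGroup.of g) b = step g b := by rw [rho_of]; rfl

lemma continuous_terp (ψ : V → ℝ) : Continuous (terp ψ) := by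
  refine contE (fun y b => ψ b + max (al (rz y)) 0 * (ψ (step false b) - ψ b)
    + max (-al (rz y)) 0 * (ψ (bstep false b) - ψ b)
    + max (al (rw' y)) 0 * (ψ (step true b) - ψ b)
    + max (-al (rw' y)) 0 * (ψ (bstep true b) - ψ b))
    (fun y b => ψ b + th (rz y) * (ψ (step false b) - ψ b)
      + th (rw' y) * (ψ (step true b) - ψ b)) ?_ ?_ ?_ ?_
  · intro b y hy
    have h1 : ContinuousAt (fun y => al (rz y)) y :=
      ContinuousAt.comp (g := al) (al_cont hy.1) continuous_rz.continuousAt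
    have h2 : ContinuousAt (fun y => al (rw' y)) y :=
      ContinuousAt.comp (g := al) (al_cont hy.2) continuous_rw.continuousAt
    fun_prop
  · intro b y hy
    have h1 := th_contAt_z hy
    have h2 := th_contAt_w hy
    fun_prop
  · intro p _
    unfold terp
    rcases gam_cases p.1 with ⟨h, h', e⟩ | ⟨h, h', e⟩ | ⟨h, h', e⟩
    · rw [e, rho_step, bstep_step, h', al_zero, th_zero, th_of_neg h, max_eq_right h.le,
        max_eq_left (by linarith : 0 ≤ -al (rz p.1))]
      simp; ring
    · rw [e, rho_step, bstep_step, h', al_zero, th_zero, th_of_neg h, max_eq_right h.le,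
        max_eq_left (by linarith : 0 ≤ -al (rw' p.1))]
      simp; ring
    · rw [e, map_one, Equiv.Perm.one_apply, th_of_nonneg h, th_of_nonneg h', max_eq_left h,
        max_eq_left h', max_eq_right (by linarith : -al (rz p.1) ≤ 0),
        max_eq_right (by linarith : -al (rw' p.1) ≤ 0)]
      ring
  · intro p _; rfl

open Classical in
/-- the root loop coordinate -/
noncomputable def zroot (p : EE) : UnitAddCircle := if fc p = root then rz p.1 else 0

lemma step_root_iff (b : V) : step false b = root ↔ b = root := by
  constructor
  · intro h
    have := bstep_step false b
    rw [h] at this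
    rw [← this]; rfl
  · rintro rfl; rfl

lemma continuous_zroot : Continuous zroot := by
  classical
  refine contE (fun y b => if b = root then rz y else 0) (fun y b => if b = root then rz y else 0)
    ?_ ?_ ?_ ?_
  · intro b y _
    by_cases h : b = root
    · simp only [if_pos h]; fun_prop
    · simp only [if_neg h]; fun_prop
  · intro b y _
    by_cases h : b = root
    · simp only [if_pos h]; fun_prop
    · simp only [if_neg h]; fun_prop
  · intro p _
    unfold zroot
    rcases gam_cases p.1 with ⟨h, h', e⟩ | ⟨h, h', e⟩ | ⟨h, h', e⟩
    · rw [e, rho_step]; simp only [step_root_iff]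
    · simp [h']
    · simp [e]
  · intro p _; rfl

lemma sec_cont {T : Type*} [TopologicalSpace T] {g : T → Rose} (hg : Continuous g)
    (h0 : ∀ t, rw' (g t) = 0) : Continuous (fun t => mkE (g t) root) := by
  rw [continuous_iff_continuousAt]
  intro t
  obtain ⟨i, hi⟩ : ∃ i, g t ∈ UU i := by
    rcases mem_UU (g t) with h | h
    exacts [⟨_, h⟩, ⟨_, h⟩]
  have hr : ∀ t, rho (ga i (g t)) root = root := by
    intro t
    cases i
    · rcases gam_cases (g t) with ⟨h, h', e⟩ | ⟨h, h', e⟩ | ⟨h, h', e⟩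
      · simp only [ga, e, rho_step]; rfl
      · rw [h0, al_zero] at h; exact absurd h (lt_irrefl _)
      · simp [ga, e]
    · simp [ga]
  have he : ∀ t, mkE (g t) root = (core.localTriv i).toOpenPartialHomeomorph.symm (g t, root) := by
    intro t
    rw [FiberBundleCore.localTriv_symm_apply]
    change _ = mkE (g t) (rho (ga (core.indexAt (g t)) (g t) * (ga i (g t))⁻¹) root)
    rw [ga_index, one_mul, map_inv]
    congr 1
    rw [Equiv.Perm.eq_inv_iff_eq, hr]
  simp only [he]
  refine ContinuousAt.comp (f := fun t => (g t, root))
    (g := (core.localTriv i).toOpenPartialHomeomorph.symm) ?_ (by fun_prop)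
  apply OpenPartialHomeomorph.continuousAt_symm
  exact (core.mem_localTriv_target i _).2 hi

/-- sign of a letter -/
def sg (l : Ltr) : ℝ := if l.2 then 1 else -1

/-- Point at height `t` along the last edge of the word. -/
noncomputable def eps (v : List Ltr) (t : ℝ) : UnitAddCircle × UnitAddCircle :=
  match v with
  | [] => 0
  | h :: _ => if h.1 then (0, ee (sg h * t)) else (ee (sg h * t), 0)

lemma ee_neg_one : ee (-1) = 0 := by rw [← ee_add_one]; simp [ee_zero]

lemma ee_sg (h : Ltr) : ee (sg h) = 0 := by
  unfold sg; split_ifs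
  · exact ee_one
  · exact ee_neg_one

lemma eps_zero (v : List Ltr) : eps v 0 = 0 := by
  unfold eps
  cases v with
  | nil => rfl
  | cons h T => simp [ee_zero]

lemma eps_one (v : List Ltr) : eps v 1 = 0 := by
  unfold eps
  cases v with
  | nil => rfl
  | cons h T => simp [ee_sg]

lemma eps_rose (v : List Ltr) (t : ℝ) : eps v t ∈ Rose := by
  unfold eps
  cases v with
  | nil => left; rfl
  | cons h T =>
    simp only
    split_ifs
    · left; rfl
    · right; rfl

@[fun_prop]
lemma continuous_eps (v : List Ltr) : Continuous (eps v) := by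
  unfold eps
  cases v with
  | nil => exact continuous_const
  | cons h T =>
    simp only
    split_ifs <;> fun_prop

open Classical in
/-- suffix indicator -/
noncomputable def suf (v : List Ltr) (b : V) : ℝ := if v <:+ b.1 then 1 else 0

/-- cut off -/
noncomputable def sig (n : ℕ) (d : ℝ) : ℝ := max 0 (min 1 (d - n + 1))

/-- words of length between 1 and `N` -/
noncomputable def SS (N : ℕ) : Finset (List Ltr) :=
  open Classical in ((List.finite_length_le Ltr N).toFinset).filter (fun v => v ≠ [])

lemma mem_SS {N : ℕ} {v : List Ltr} : v ∈ SS N ↔ v.length ≤ N ∧ v ≠ [] := by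
  simp [SS]

/-- truncation -/
noncomputable def FF (N : ℕ) (d : ℝ) (p : EE) : UnitAddCircle × UnitAddCircle :=
  (zroot p, 0) + ∑ v ∈ SS N, eps v (terp (suf v) p * sig v.length d)

lemma continuous_FF (N : ℕ) : Continuous (fun a : ℝ × EE => FF N a.1 a.2) := by
  unfold FF sig
  have h1 := continuous_zroot
  have h2 : ∀ v, Continuous (terp (suf v)) := fun v => continuous_terp _
  fun_prop

/-- length of the word, interpolated -/
noncomputable def hgt (p : EE) : ℝ := terp (fun b => (b.1.length : ℝ)) p

lemma suf_root {v : List Ltr} (h : v ≠ []) : suf v root = 0 := by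
  simp [suf, root, h]

lemma struct1 (g : Bool) (x : ℝ) (hx0 : 0 ≤ x) (hx1 : x < 1) (b : V) :
    (b = root ∧ g = false) ∨
    (¬ (b = root ∧ g = false) ∧ ∃ (v0 : List Ltr) (t0 : ℝ), v0 ≠ [] ∧
      eps v0 t0 = (if g then (0, ee x) else (ee x, 0)) ∧
      (v0.length : ℝ) ≤ b.1.length + x * ((step g b).1.length - b.1.length) + 1 ∧
      ∀ v : List Ltr, v ≠ [] →
        (v = v0 ∧ suf v b + x * (suf v (step g b) - suf v b) = t0) ∨
        (v ≠ v0 ∧ v <:+ v0 ∧ suf v b + x * (suf v (step g b) - suf v b) = 1) ∨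
        (v ≠ v0 ∧ suf v b + x * (suf v (step g b) - suf v b) = 0)) := by
  have hsuf : ∀ (h : Ltr) (T : List Ltr), ¬ ((h :: T) <:+ T) := by
    intro h T hh
    have := hh.length_le
    simp at this
  rcases edge_cases (g, true) b with ⟨h1, h2, h3⟩ | h | h
  · left; exact ⟨h1, h2⟩
  · have hn : ¬ (b = root ∧ g = false) := by
      rintro ⟨rfl, rfl⟩
      have : lact (false, true) root = root := rfl
      rw [this] at h
      simp [root] at h
    right
    refine ⟨hn, (g, true) :: b.1, x, by simp, ?_, ?_, ?_⟩
    · simp [eps, sg]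
    · have : (step g b).1 = (g, true) :: b.1 := h
      rw [this]
      push_cast [List.length_cons]
      nlinarith
    · intro v hv
      have hs : (step g b).1 = (g, true) :: b.1 := h
      by_cases e : v = (g, true) :: b.1
      · left
        refine ⟨e, ?_⟩
        simp only [suf, hs, e]
        rw [if_neg (hsuf _ _), if_pos (List.suffix_refl _)]
        ring
      · right
        by_cases e' : v <:+ b.1
        · left
          have e2 : v <:+ (g, true) :: b.1 := e'.trans (List.suffix_cons _ _)
          refine ⟨e, e2, ?_⟩
          simp only [suf, hs]
          rw [if_pos e', if_pos e2]
          ring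
        · right
          have e2 : ¬ v <:+ (g, true) :: b.1 := by
            rw [List.suffix_cons_iff]; tauto
          refine ⟨e, ?_⟩
          simp only [suf, hs]
          rw [if_neg e', if_neg e2]
          ring
  · have hs : b.1 = (g, false) :: (step g b).1 := h
    have hn : ¬ (b = root ∧ g = false) := by
      rintro ⟨rfl, rfl⟩
      simp [root] at hs
    right
    refine ⟨hn, b.1, 1 - x, ?_, ?_, ?_, ?_⟩
    · rw [hs]; simp
    · have : ee (-(1 - x)) = ee x := by rw [← ee_add_one]; congr 1; ring
      rw [hs]
      simp [eps, sg]
      simp at this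
      rw [this]
    · have : (b.1.length : ℝ) = (step g b).1.length + 1 := by
        conv_lhs => rw [hs]
        push_cast [List.length_cons]; ring
      rw [this]
      nlinarith
    · intro v hv
      by_cases e : v = b.1
      · left
        refine ⟨e, ?_⟩
        have e2 : ¬ v <:+ (step g b).1 := by
          rw [e, hs]; exact hsuf _ _
        simp only [suf]
        rw [if_neg e2, e, if_pos (List.suffix_refl _)]
        ring
      · right
        by_cases e' : v <:+ (step g b).1
        · left
          have e2 : v <:+ b.1 := by rw [hs]; exact e'.trans (List.suffix_cons _ _)
          refine ⟨e, e2, ?_⟩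
          simp only [suf]
          rw [if_pos e', if_pos e2]
          ring
        · right
          have e2 : ¬ v <:+ b.1 := by
            intro e3
            rw [hs, List.suffix_cons_iff, ← hs] at e3
            tauto
          refine ⟨e, ?_⟩
          simp only [suf]
          rw [if_neg e', if_neg e2]
          ring

lemma struct2 (p : EE) : (fc p = root ∧ rw' p.1 = 0 ∧ ∀ v ≠ [], terp (suf v) p = 0) ∨
    (zroot p = 0 ∧ ∃ (v0 : List Ltr) (t0 : ℝ), v0 ≠ [] ∧ eps v0 t0 = p.1.1 ∧
      (v0.length : ℝ) ≤ hgt p + 1 ∧ ∀ v : List Ltr, v ≠ [] →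
        (v = v0 ∧ terp (suf v) p = t0) ∨ (v ≠ v0 ∧ v <:+ v0 ∧ terp (suf v) p = 1) ∨
        (v ≠ v0 ∧ terp (suf v) p = 0)) := by
  by_cases hw : rw' p.1 = 0
  · have ht : ∀ ψ, terp ψ p = ψ (fc p) + th (rz p.1) * (ψ (step false (fc p)) - ψ (fc p)) := by
      intro ψ; simp [terp, hw, th_zero]
    rcases struct1 false (th (rz p.1)) (th_ge _) (th_lt _) (fc p) with ⟨h, _⟩ | ⟨h, h'⟩
    · left
      refine ⟨h, hw, ?_⟩
      intro v hv
      have : step false root = root := rfl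
      rw [ht, h, this, suf_root hv]; ring
    · right
      refine ⟨by simp only [zroot]; rw [if_neg (fun h2 => h ⟨h2, rfl⟩)], ?_⟩
      simp only [hgt, ht]
      obtain ⟨v0, t0, a1, a2, a3, a4⟩ := h'
      refine ⟨v0, t0, a1, ?_, a3, a4⟩
      rw [a2, ee_th]
      simp only [Bool.false_eq_true, if_false]
      exact Prod.ext rfl hw.symm
  · have hz : rz p.1 = 0 := (rose_or _).resolve_right hw
    have ht : ∀ ψ, terp ψ p = ψ (fc p) + th (rw' p.1) * (ψ (step true (fc p)) - ψ (fc p)) := by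
      intro ψ; simp [terp, hz, th_zero]
    rcases struct1 true (th (rw' p.1)) (th_ge _) (th_lt _) (fc p) with ⟨_, h⟩ | ⟨h, h'⟩
    · exact absurd h (by simp)
    · right
      refine ⟨by simp [zroot, hz], ?_⟩
      simp only [hgt, ht]
      obtain ⟨v0, t0, a1, a2, a3, a4⟩ := h'
      refine ⟨v0, t0, a1, ?_, a3, a4⟩
      rw [a2, ee_th]
      simp only [if_true]
      exact Prod.ext hz.symm rfl

lemma sig_pos {n : ℕ} {d : ℝ} (h : sig n d ≠ 0) : (n : ℝ) - 1 < d := by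
  by_contra h'
  apply h
  unfold sig
  rw [max_eq_left]
  exact (min_le_right _ _).trans (by linarith)

lemma sig_lt {n : ℕ} {d : ℝ} (h : sig n d ≠ 1) : d < n := by
  by_contra h'
  apply h
  unfold sig
  rw [min_eq_left (by linarith), max_eq_right (by norm_num)]

lemma FF_root {p : EE} (h : fc p = root) (hw : rw' p.1 = 0) (N : ℕ) (d : ℝ) : FF N d p = p.1.1 := by
  have ht : ∀ v ≠ [], terp (suf v) p = 0 := by
    intro v hv
    have : step false root = root := rfl
    simp [terp, hw, th_zero, h, this, suf_root hv]
  unfold FF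
  rw [Finset.sum_eq_zero]
  · simp only [zroot, h, if_true, add_zero]
    exact Prod.ext rfl hw.symm
  · intro v hv
    rw [ht v (mem_SS.1 hv).2, zero_mul, eps_zero]

lemma FF_rose (N : ℕ) (d : ℝ) (p : EE) : FF N d p ∈ Rose := by
  rcases struct2 p with ⟨h, hw, _⟩ | ⟨hz, v0, t0, h0, h1, h2, h3⟩
  · rw [FF_root h hw]; exact p.1.2
  · unfold FF
    rw [hz]
    have hz0 : ((0 : UnitAddCircle), (0 : UnitAddCircle)) = 0 := rfl
    rw [hz0, zero_add]
    have key : ∀ v v', v ≠ [] → v' ≠ [] → v <:+ v0 → v' <:+ v0 → v.length < v'.length →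
        eps v (terp (suf v) p * sig v.length d) ≠ 0 →
        eps v' (terp (suf v') p * sig v'.length d) ≠ 0 → False := by
      intro v v' hv hv' s s' hl e e'
      have n1 : v ≠ v0 := by
        rintro rfl
        have := s'.length_le
        omega
      have n2 : terp (suf v) p = 1 := by
        rcases h3 v hv with h | h | h
        · exact absurd h.1 n1
        · exact h.2.2
        · exfalso; apply e; rw [h.2, zero_mul, eps_zero]
      have n3 : sig v.length d ≠ 1 := by
        intro h; apply e; rw [h, n2, mul_one, eps_one]
      have n4 : sig v'.length d ≠ 0 := by
        intro h; apply e'; rw [h, mul_zero, eps_zero]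
      have n5 := sig_lt n3
      have n6 := sig_pos n4
      have : (v.length : ℝ) + 1 ≤ v'.length := by exact_mod_cast hl
      linarith
    have hsuf : ∀ v, v ≠ [] → eps v (terp (suf v) p * sig v.length d) ≠ 0 → v <:+ v0 := by
      intro v hv e
      rcases h3 v hv with h | h | h
      · rw [h.1]
      · exact h.2.1
      · exfalso; apply e; rw [h.2, zero_mul, eps_zero]
    by_cases hex : ∃ v ∈ SS N, eps v (terp (suf v) p * sig v.length d) ≠ 0
    · obtain ⟨v, hv, hve⟩ := hex
      rw [Finset.sum_eq_single_of_mem v hv]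
      · exact eps_rose _ _
      · intro v' hv' hne
        by_contra he
        have g1 := (mem_SS.1 hv).2
        have g2 := (mem_SS.1 hv').2
        have s1 := hsuf v g1 hve
        have s2 := hsuf v' g2 he
        rcases lt_trichotomy v.length v'.length with hl | hl | hl
        · exact key v v' g1 g2 s1 s2 hl hve he
        · exact hne ((List.suffix_of_suffix_length_le s2 s1 hl.ge).eq_of_length hl.symm)
        · exact key v' v g2 g1 s2 s1 hl he hve
    · push Not at hex
      rw [Finset.sum_eq_zero hex]
      left; rfl

lemma FF_full {N : ℕ} {p : EE} (h : hgt p + 1 ≤ N) : FF N N p = p.1.1 := by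
  rcases struct2 p with ⟨h, hw, _⟩ | ⟨hz, v0, t0, h0, h1, h2, h3⟩
  · exact FF_root h hw _ _
  · unfold FF
    rw [hz]
    have hz0 : ((0 : UnitAddCircle), (0 : UnitAddCircle)) = 0 := rfl
    rw [hz0, zero_add]
    have hl : v0.length ≤ N := by
      have := h2.trans h
      exact_mod_cast this
    have hsig : ∀ n : ℕ, n ≤ N → sig n N = 1 := by
      intro n hn
      by_contra h
      have := sig_lt h
      have : (n : ℝ) ≤ N := by exact_mod_cast hn
      linarith
    rw [Finset.sum_eq_single_of_mem v0 (mem_SS.2 ⟨hl, h0⟩), hsig _ hl, mul_one]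
    · rcases h3 v0 h0 with h | h | h
      · rw [h.2, h1]
      · exact absurd rfl h.1
      · exact absurd rfl h.1
    · intro v hv hne
      have := mem_SS.1 hv
      rw [hsig _ this.1, mul_one]
      rcases h3 v this.2 with h | h | h
      · exact absurd h.1 hne
      · rw [h.2.2, eps_one]
      · rw [h.2, eps_zero]

lemma FF_zero (N : ℕ) (p : EE) : FF N 0 p = (zroot p, 0) := by
  unfold FF
  rw [Finset.sum_eq_zero, add_zero]
  intro v hv
  have := mem_SS.1 hv
  have hl : 1 ≤ v.length := List.length_pos_iff.2 this.2
  have : sig v.length 0 = 0 := by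
    by_contra h
    have := sig_pos h
    have : (1 : ℝ) ≤ v.length := by exact_mod_cast hl
    linarith
  rw [this, mul_zero, eps_zero]

lemma trunc {K : Type*} [TopologicalSpace K] [CompactSpace K] (Φ : C(K, EE)) :
    ∃ G : C(unitInterval × K, Rose), (∀ x, G (0, x) = (Φ x).1) ∧ (∀ x, (G (1, x)).1.2 = 0) ∧
      (∀ x t, fc (Φ x) = root → (Φ x).1.1.2 = 0 → G (t, x) = (Φ x).1) ∧
      (∀ x x', Φ x = Φ x' → ∀ t, G (t, x) = G (t, x')) := by
  have hc : Continuous (fun x => hgt (Φ x)) := (continuous_terp _).comp Φ.continuous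
  obtain ⟨M, hM⟩ := (isCompact_range hc).bddAbove
  obtain ⟨N, hN⟩ := exists_nat_ge (M + 1)
  have hN' : ∀ x, hgt (Φ x) + 1 ≤ N := by
    intro x
    have := hM (mem_range_self x)
    linarith
  refine ⟨⟨fun a => ⟨FF N (N * (1 - (a.1 : ℝ))) (Φ a.2), FF_rose _ _ _⟩, ?_⟩, ?_, ?_, ?_, ?_⟩
  · apply Continuous.subtype_mk
    exact (continuous_FF N).comp (g := fun a : ℝ × EE => FF N a.1 a.2)
      (f := fun a : unitInterval × K => (N * (1 - (a.1 : ℝ)), Φ a.2)) (by fun_prop)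
  · intro x
    apply Subtype.ext
    simp only [ContinuousMap.coe_mk, Set.Icc.coe_zero, sub_zero, mul_one]
    exact FF_full (hN' x)
  · intro x
    simp only [ContinuousMap.coe_mk, Set.Icc.coe_one, sub_self, mul_zero, FF_zero]
  · intro x t h h'
    apply Subtype.ext
    exact FF_root h h' _ _
  · intro x x' h t
    simp [h]

end PMB


namespace PMB

open Filter Topology

/-- inner square -/
def AA : Set (ℝ × ℝ) := {a | max |a.1| |a.2| = 1/4}

lemma ext_EE {p q : EE} (h : p.1 = q.1) (h' : fc p = fc q) : p = q := by
  obtain ⟨y, b⟩ := p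
  obtain ⟨y', b'⟩ := q
  simp only at h
  subst h
  have : b = b' := h'
  rw [this]

lemma lift1 (k : C(R, Rose)) (hk : ∀ p : R, max |p.1.1 - 1/2| |p.1.2| = 1/4 → (k p).1.2 = 0) :
    ∃ Ψ : C(R, EE), (∀ p, (Ψ p).1 = k p) ∧
      ∀ p : R, max |p.1.1 - 1/2| |p.1.2| = 1/4 → fc (Ψ p) = root := by
  have hA : ∀ a : AA, 1/4 ≤ max (2 * |a.1.1|) |a.1.2| := by
    intro a
    have h1 : max |a.1.1| |a.1.2| = 1/4 := a.2
    rw [← h1]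
    exact max_le_max (by linarith [abs_nonneg a.1.1]) le_rfl
  have hA' : ∀ a : AA, max (2 * |a.1.1|) |a.1.2| ≤ 1/2 := by
    intro a
    have h1 : max |a.1.1| |a.1.2| = 1/4 := a.2
    have h2 := le_max_left |a.1.1| |a.1.2|
    have h3 := le_max_right |a.1.1| |a.1.2|
    exact max_le (by linarith) (by linarith)
  let mu : unitInterval × AA → ℝ := fun x => min (1 + 3 * (x.1 : ℝ)) (1 / max (2 * |x.2.1.1|) |x.2.1.2|)
  have mu_c : Continuous mu := by
    refine Continuous.min (by fun_prop) ?_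
    refine Continuous.div₀ (by fun_prop) (by fun_prop) ?_
    intro x
    have := hA x.2
    linarith
  have mu1 : ∀ x, 1 ≤ mu x := by
    intro x
    refine le_min (by linarith [x.1.2.1]) ?_
    rw [le_div_iff₀ (by linarith [hA x.2])]
    linarith [hA' x.2]
  have mu2 : ∀ x, mu x * max (2 * |x.2.1.1|) |x.2.1.2| ≤ 1 := by
    intro x
    rw [← le_div_iff₀ (by linarith [hA x.2])]
    exact min_le_right _ _
  have hR : ∀ x : unitInterval × AA, ((1/2 + mu x * x.2.1.1, mu x * x.2.1.2) : ℝ × ℝ) ∈ R := by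
    intro x
    rw [mem_R]
    have m0 : 0 ≤ mu x := by linarith [mu1 x]
    have m1 : |mu x * x.2.1.1| ≤ 1/2 := by
      rw [abs_mul, abs_of_nonneg m0]
      have := mul_le_mul_of_nonneg_left (le_max_left (2 * |x.2.1.1|) |x.2.1.2|) m0
      linarith [mu2 x]
    have m2 : |mu x * x.2.1.2| ≤ 1 := by
      rw [abs_mul, abs_of_nonneg m0]
      have := mul_le_mul_of_nonneg_left (le_max_right (2 * |x.2.1.1|) |x.2.1.2|) m0
      linarith [mu2 x]
    have m3 := abs_le.1 m1
    have m4 := abs_le.1 m2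
    refine ⟨⟨by simp only; linarith, by simp only; linarith⟩, ⟨m4.1, m4.2⟩, ?_⟩
    simp only [add_sub_cancel_left]
    rw [abs_mul, abs_mul, abs_of_nonneg m0, ← mul_max_of_nonneg _ _ m0]
    have : max |x.2.1.1| |x.2.1.2| = 1/4 := x.2.2
    rw [this]
    linarith [mu1 x]
  let ι : C(unitInterval × AA, R) := ⟨fun x => ⟨_, hR x⟩, by fun_prop⟩
  let H : C(unitInterval × AA, Rose) := k.comp ι
  have hmu0 : ∀ a, mu (0, a) = 1 := by
    intro a
    apply le_antisymm _ (mu1 _)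
    refine (min_le_left _ _).trans ?_
    simp
  have hH0 : ∀ a : AA, (H (0, a)).1.2 = 0 := by
    intro a
    apply hk
    have : max |a.1.1| |a.1.2| = 1/4 := a.2
    simpa [ι, hmu0] using this
  let s : C(AA, EE) := ⟨fun a => mkE (H (0, a)) root, sec_cont (by fun_prop) hH0⟩
  let Φ := cov.liftHomotopy H s (fun a => rfl)
  have hΦ : ∀ x, (Φ x).1 = H x := fun x => congrFun (cov.liftHomotopy_lifts H s (fun a => rfl)) x
  have hΦ0 : ∀ a, Φ (0, a) = mkE (H (0, a)) root := fun a => cov.liftHomotopy_zero H s (fun a => rfl) a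
  let m : R → ℝ := fun p => max |p.1.1 - 1/2| |p.1.2|
  have mc : Continuous m := by fun_prop
  have m_ge : ∀ p, 1/4 ≤ m p := fun p => (mem_R.1 p.2).2.2
  have m_le : ∀ p, m p ≤ 1 := by
    intro p
    have := mem_R.1 p.2
    refine max_le (abs_le.2 ⟨by linarith, by linarith⟩) (abs_le.2 ⟨by linarith, by linarith⟩)
  have ha : ∀ p : R, (((p.1.1 - 1/2) / (4 * m p), p.1.2 / (4 * m p)) : ℝ × ℝ) ∈ AA := by
    intro p
    have h4 : 0 < 4 * m p := by linarith [m_ge p]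
    change max |(p.1.1 - 1/2) / (4 * m p)| |p.1.2 / (4 * m p)| = 1/4
    rw [abs_div, abs_div, abs_of_pos h4, max_div_div_right h4.le]
    change m p / (4 * m p) = 1/4
    have hne : m p ≠ 0 := by linarith [m_ge p]
    rw [div_eq_div_iff h4.ne' (by norm_num)]; ring
  let j : C(R, unitInterval × AA) := ⟨fun p => (⟨(4 * m p - 1) / 3, by
    constructor
    · linarith [m_ge p]
    · linarith [m_le p]⟩, ⟨_, ha p⟩), by
    refine Continuous.prodMk (by fun_prop) ?_
    refine Continuous.subtype_mk ?_ _
    refine Continuous.prodMk ?_ ?_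
    · exact Continuous.div₀ (by fun_prop) (by fun_prop) (fun p => by linarith [m_ge p])
    · exact Continuous.div₀ (by fun_prop) (by fun_prop) (fun p => by linarith [m_ge p])⟩
  have hj : ∀ p, ι (j p) = p := by
    intro p
    have h4 : 0 < 4 * m p := by linarith [m_ge p]
    have hmu : mu (j p) = 4 * m p := by
      change min (1 + 3 * ((4 * m p - 1) / 3)) (1 / max (2 * |(p.1.1 - 1/2) / (4 * m p)|) |p.1.2 / (4 * m p)|) = 4 * m p
      have e1 : 1 + 3 * ((4 * m p - 1) / 3) = 4 * m p := by ring
      rw [e1]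
      apply min_eq_left
      have := hA (j p).2
      rw [le_div_iff₀ (by
        have := hA (j p).2
        change 1/4 ≤ max (2 * |(p.1.1 - 1/2) / (4 * m p)|) |p.1.2 / (4 * m p)| at this
        linarith)]
      rw [mul_max_of_nonneg _ _ h4.le, abs_div, abs_div, abs_of_pos h4]
      have := mem_R.1 p.2
      have b1 : |p.1.1 - 1/2| ≤ 1/2 := abs_le.2 ⟨by linarith, by linarith⟩
      have b2 : |p.1.2| ≤ 1 := abs_le.2 ⟨by linarith, by linarith⟩
      apply max_le
      · have : 4 * m p * (2 * (|p.1.1 - 1/2| / (4 * m p))) = 2 * |p.1.1 - 1/2| := by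
          rw [mul_left_comm, mul_div_cancel₀ _ h4.ne']
        rw [this]; linarith
      · have : 4 * m p * (|p.1.2| / (4 * m p)) = |p.1.2| := mul_div_cancel₀ _ h4.ne'
        rw [this]; exact b2
    apply Subtype.ext
    change ((1/2 + mu (j p) * ((p.1.1 - 1/2) / (4 * m p)), mu (j p) * (p.1.2 / (4 * m p))) : ℝ × ℝ) = p.1
    rw [hmu]
    apply Prod.ext
    · change 1/2 + 4 * m p * ((p.1.1 - 1/2) / (4 * m p)) = p.1.1
      rw [mul_div_cancel₀ _ h4.ne']; ring
    · change 4 * m p * (p.1.2 / (4 * m p)) = p.1.2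
      rw [mul_div_cancel₀ _ h4.ne']
  refine ⟨Φ.comp j, ?_, ?_⟩
  · intro p
    change (Φ (j p)).1 = k p
    rw [hΦ]
    change k (ι (j p)) = k p
    rw [hj]
  · intro p hp
    have : j p = (0, (j p).2) := by
      refine Prod.ext (Subtype.ext ?_) rfl
      change (4 * m p - 1) / 3 = 0
      have : m p = 1/4 := hp
      rw [this]; norm_num
    change fc (Φ (j p)) = root
    rw [this, hΦ0]
    rfl

lemma swap_eq (l r : C(unitInterval, EE)) (h : ∀ t, (l t).1 = (r t).1) (h0 : l 0 = r 1)
    (h1 : l 1 = r 0) : ∀ t, l t = r t := by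
  let O : unitInterval → Set (V × V) := fun t =>
    {q | ∃ x, q = (rho x (fc (l t)), rho x (fc (r t)))}
  have Osh : ∀ (g : FreeGroup Bool) (a b : V), {q : V × V | ∃ x, q = (rho x (rho g a), rho x (rho g b))}
      = {q : V × V | ∃ x, q = (rho x a, rho x b)} := by
    intro g a b
    ext q
    constructor
    · rintro ⟨x, rfl⟩
      exact ⟨x * g, by simp [Equiv.Perm.mul_apply]⟩
    · rintro ⟨x, rfl⟩
      exact ⟨x * g⁻¹, by simp [Equiv.Perm.mul_apply]⟩
  have hO : IsLocallyConstant O := by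
    rw [IsLocallyConstant.iff_eventually_eq]
    intro t
    obtain ⟨i, hi⟩ : ∃ i, (l t).1 ∈ UU i := by
      rcases mem_UU (l t).1 with h | h
      exacts [⟨_, h⟩, ⟨_, h⟩]
    have e1 := l.continuous.continuousAt.eventually (fc_ev i hi)
    have e2 := r.continuous.continuousAt.eventually (fc_ev i ((h t) ▸ hi))
    filter_upwards [e1, e2] with s hs1 hs2
    change {q : V × V | _} = {q : V × V | _}
    rw [← Osh (ga i (l s).1) (fc (l s)) (fc (r s)), ← Osh (ga i (l t).1) (fc (l t)) (fc (r t)), hs1,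
      h s, hs2, h t]
  have := hO.apply_eq_of_preconnectedSpace 0 1
  have hm : (fc (l 0), fc (r 0)) ∈ O 0 := ⟨1, by simp⟩
  rw [this] at hm
  obtain ⟨x, hx⟩ := hm
  rw [Prod.ext_iff] at hx
  simp only at hx
  rw [h1, ← h0] at hx
  have he := no_swap hx.2.symm hx.1.symm
  have hl0 : l 0 = r 0 := ext_EE (h 0) he
  have := cov.eq_of_comp_eq l.continuous r.continuous (funext h) 0 hl0
  exact fun t => congrFun this t

lemma lift2 (k : C(X, Rose)) (hk : ∀ x ∈ C2, (k x).1.2 = 0) (hc : ∃ c, ∀ x ∈ C1, k x = c) :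
    ∃ Φ : C(X, EE), (∀ x, (Φ x).1 = k x) ∧ (∀ x ∈ C2, fc (Φ x) = root) ∧
      ∃ e, ∀ x ∈ C1, Φ x = e := by
  obtain ⟨c, hc⟩ := hc
  obtain ⟨Ψ, hΨ, hΨ0⟩ := lift1 (k.comp ⟨pr, continuous_pr⟩)
    (fun p hp => hk _ ((mem_C2 _).2 ⟨p, rfl, hp⟩))
  have hΨ' : ∀ p, (Ψ p).1 = k (pr p) := hΨ
  have hT : ∀ (s : unitInterval) (y : ℝ), y = 1 ∨ y = -1 → ((s : ℝ), y) ∈ R := by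
    intro s y hy
    rw [mem_R]
    refine ⟨⟨s.2.1, s.2.2⟩, ?_, ?_⟩
    · rcases hy with rfl | rfl <;> norm_num
    · refine le_trans ?_ (le_max_right _ _)
      rcases hy with rfl | rfl <;> norm_num
  have edge : ∀ (y : ℝ) (hy : y = 1 ∨ y = -1) (s s' : unitInterval),
      Ψ ⟨_, hT s y hy⟩ = Ψ ⟨_, hT s' y hy⟩ := by
    intro y hy s s'
    refine cov.const_of_comp (g := fun s : unitInterval => Ψ ⟨_, hT s y hy⟩) (by fun_prop) ?_ s s'
    intro a a'
    rw [hΨ', hΨ', hc _ (C1_pr.2 hy), hc _ (C1_pr.2 hy)]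
  have hS : ∀ (x : ℝ) (y : ℝ), x = 0 ∨ x = 1 → -1 ≤ y → y ≤ 1 → (x, y) ∈ R := by
    intro x y hx h1 h2
    rw [mem_R]
    refine ⟨?_, ⟨h1, h2⟩, ?_⟩
    · rcases hx with rfl | rfl <;> norm_num
    · refine le_trans ?_ (le_max_left _ _)
      rcases hx with rfl | rfl <;> norm_num [abs_of_pos]
  let l : C(unitInterval, EE) := ⟨fun t => Ψ ⟨_, hS 0 (2 * t - 1) (Or.inl rfl)
    (by linarith [t.2.1]) (by linarith [t.2.2])⟩, by fun_prop⟩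
  let r : C(unitInterval, EE) := ⟨fun t => Ψ ⟨_, hS 1 (-(2 * t - 1)) (Or.inr rfl)
    (by linarith [t.2.2]) (by linarith [t.2.1])⟩, by fun_prop⟩
  have hlr : ∀ t, l t = r t := by
    apply swap_eq
    · intro t
      change (Ψ _).1 = (Ψ _).1
      rw [hΨ', hΨ']
      congr 1
      exact pr_eq.2 (Or.inr (Or.inl ⟨rfl, rfl, by simp⟩))
    · have := edge (-1) (Or.inr rfl) 0 1
      change Ψ _ = Ψ _
      convert this using 3 <;> norm_num
    · have := edge 1 (Or.inl rfl) 0 1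
      change Ψ _ = Ψ _
      convert this using 3 <;> norm_num
  have hid : ∀ p q : R, p.1.1 = 0 → q.1.1 = 1 → p.1.2 = -q.1.2 → Ψ p = Ψ q := by
    intro p q h0 h1 h2
    have b := (mem_R.1 p.2).2.1
    have := hlr ⟨(p.1.2 + 1) / 2, by constructor <;> linarith⟩
    change Ψ _ = Ψ _ at this
    convert this using 2
    · apply Subtype.ext; apply Prod.ext
      · exact h0
      · change p.1.2 = 2 * ((p.1.2 + 1) / 2) - 1
        ring
    · apply Subtype.ext; apply Prod.ext
      · exact h1
      · change q.1.2 = -(2 * ((p.1.2 + 1) / 2) - 1)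
        rw [h2]; ring
  obtain ⟨Φ, hΦ⟩ := descend1 Ψ Ψ.continuous hid
  refine ⟨Φ, ?_, ?_, Ψ ⟨_, hT 0 1 (Or.inl rfl)⟩, ?_⟩
  · intro x
    obtain ⟨p, rfl⟩ := pr_surj x
    rw [hΦ, hΨ']
  · intro x hx
    obtain ⟨p, rfl, hp⟩ := (mem_C2 x).1 hx
    rw [hΦ]
    exact hΨ0 p hp
  · intro x hx
    obtain ⟨p, rfl⟩ := pr_surj x
    have hy := C1_pr.1 hx
    rw [hΦ]
    have b := (mem_R.1 p.2).1
    have e1 : Ψ p = Ψ ⟨_, hT 0 p.1.2 hy⟩ := edge p.1.2 hy ⟨p.1.1, b⟩ 0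
    rw [e1]
    rcases hy with h | h
    · congr 3
    · have e2 := edge 1 (Or.inl rfl) 0 1
      rw [e2]
      apply hid
      · rfl
      · rfl
      · simp [h]

end PMB


namespace PMB

lemma key (f1 : C(X, X)) (h2 : ∀ x ∈ C2, f1 x ∈ C1) (h1 : ∃ c, ∀ x ∈ C1, f1 x = c) :
    ∃ g0 : C(X, X), ContinuousMap.HomotopicWith f1 g0 KP ∧ ∀ x, g0 x ∈ C1 := by
  obtain ⟨c, hc⟩ := h1
  obtain ⟨κ, L, hκ, hL, ⟨Hm⟩⟩ := model
  obtain ⟨Φ, p1, p2, e, p3⟩ := lift2 (κ.comp f1) (fun x hx => hκ _ (h2 x hx))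
    ⟨κ c, fun x hx => by simp [hc x hx]⟩
  obtain ⟨G, g1, g2, g3, g4⟩ := trunc Φ
  have q1 : ContinuousMap.HomotopicWith f1 (L.comp (κ.comp f1)) KP := by
    refine hw ⟨fun a => Hm (a.1, f1 a.2), by fun_prop⟩ ?_ ?_ ?_
    · intro x; simp
    · intro x; simp
    · intro t
      refine ⟨?_, Hm (t, c), ?_⟩
      · intro x hx
        exact Hm.prop' t _ (h2 x hx)
      · intro x hx
        simp [hc x hx]
  refine ⟨L.comp ⟨fun x => G (1, x), by fun_prop⟩, q1.trans ?_, fun x => hL _ (g2 x)⟩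
  refine hw (L.comp G) ?_ ?_ ?_
  · intro x
    simp [g1, p1]
  · intro x; rfl
  · intro t
    have hz : ∀ x ∈ C2, (Φ x).1.1.2 = 0 := by
      intro x hx
      rw [p1]; exact hκ _ (h2 x hx)
    refine ⟨?_, ?_⟩
    · intro x hx
      change L (G (t, x)) ∈ C1
      rw [g3 x t (p2 x hx) (hz x hx)]
      exact hL _ (hz x hx)
    · by_cases hne : ∃ x, x ∈ C1
      · obtain ⟨x0, hx0⟩ := hne
        refine ⟨L (G (t, x0)), ?_⟩
        intro x hx
        change L (G (t, x)) = _
        rw [g4 x x0 (by rw [p3 x hx, p3 x0 hx0]) t]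
      · exact ⟨c, fun x hx => absurd ⟨x, hx⟩ hne⟩

theorem stmt_15 (f : C(X, X)) (hf : BoundaryPreserving f)
    (hmaps : MapsTo f Bd C1)
    (he2 : Essential (restrictMap f (hmaps.mono_left Set.subset_union_right : MapsTo f C2 C1)))
    (h1 : Inessential (restrictMap f (hmaps.mono_left Set.subset_union_left : MapsTo f C1 C1))) :
    ∃ g : C(X, X), BoundaryHomotopic f g ∧
      (∃ a b : X, {x : X | g x = x} ⊆ {a, b}) ∧
      ∃ x₀ : X, {x : X | g x = x ∧ x ∉ Bd} = {x₀} := by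
  obtain ⟨f1, hf1, c, hc, hfc⟩ := step0 f hmaps h1
  have hb : BP f1 := by
    obtain ⟨H⟩ := hf1
    have := H.prop' 1
    intro x hx
    have h := this x hx
    simpa using h
  obtain ⟨g0, hg0, hg1⟩ := key f1 (fun x hx => hb x (Or.inr hx)) ⟨c, hfc⟩
  obtain ⟨g, hg, r1, r2⟩ := final f1 g0 hg0 hg1 c hc hfc
  exact ⟨g, bh_of_hw (hf1.trans hg), r1, r2⟩

end PMB
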